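/- arXiv:math/0511253 — 4 statements merged into one kernel-verified Lean document; each statement's English description precedes it below -/
import Mathlib

section
/- For every k ≥ 1, the sum of all entries of the Weingarten matrix W_{k2} = G_{k2}⁻¹ equals 1/(k+1): ∑_{p,q ∈ D(k)} W_{k2}(p,q) = 1/(k+1). (These are the even moments ∫ u₁₁^{2k} of a generator of A_o(2), whose square thus has the uniform law on [0,1].) -/
open scoped BigOperators

/-- Non-crossing pair partitions of {1,…,2k}: fixed-point-free non-crossing
involutions of `Fin (2*k)`. -/
def NCPair (k : ℕ) : Type :=
  {p : Equiv.Perm (Fin (2 * k)) //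
    (∀ x, p (p x) = x) ∧ (∀ x, p x ≠ x) ∧
    ∀ a b c d : Fin (2 * k), a < b → b < c → c < d → p a = c → p b = d → False}

instance (k : ℕ) : Fintype (NCPair k) := by unfold NCPair; infer_instance

instance (k : ℕ) : DecidableEq (NCPair k) := by unfold NCPair; infer_instance

/-- `loops p q`: the number of loops obtained by closing the composed diagram,
i.e. the number of orbits of the subgroup generated by `p` and `q` on `Fin (2*k)`. -/
noncomputable def loops {k : ℕ} (p q : NCPair k) : ℕ :=
  Nat.card (MulAction.orbitRel.Quotient
    (↥(Subgroup.closure ({p.1, q.1} : Set (Equiv.Perm (Fin (2 * k)))))) (Fin (2 * k)))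

/-- The Gram matrix `G_{kn}(p,q) = n^{l(p,q)}`. -/
noncomputable def Gram (k n : ℕ) : Matrix (NCPair k) (NCPair k) ℝ :=
  fun p q => (n : ℝ) ^ loops p q

/-- The loop distance `d(p,q) = k - l(p,q)`. -/
noncomputable def loopDist {k : ℕ} (p q : NCPair k) : ℕ := k - loops p q


/-! ### Gram matrix as a matrix of inner products -/

/-- Indicator of `i` being constant on the pairs of `p`. -/
noncomputable def Bf {k : ℕ} (p : Equiv.Perm (Fin (2 * k))) : (Fin (2 * k) → Bool) → ℝ :=
  fun i => if ∀ x, i (p x) = i x then 1 else 0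

theorem two_pow_loops {k : ℕ} (p q : NCPair k) :
    (2 : ℕ) ^ loops p q =
      Fintype.card {i : Fin (2 * k) → Bool // (∀ x, i (p.1 x) = i x) ∧ (∀ x, i (q.1 x) = i x)} := by
  classical
  unfold loops
  set H := Subgroup.closure ({p.1, q.1} : Set (Equiv.Perm (Fin (2 * k)))) with hH
  have e : (MulAction.orbitRel.Quotient H (Fin (2 * k)) → Bool) ≃
      {i : Fin (2 * k) → Bool // (∀ x, i (p.1 x) = i x) ∧ (∀ x, i (q.1 x) = i x)} :=
    { toFun := fun f => ⟨fun x => f (Quotient.mk _ x), by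
        have hp : p.1 ∈ H := Subgroup.subset_closure (by simp)
        have hq : q.1 ∈ H := Subgroup.subset_closure (by simp)
        constructor
        · intro x
          exact congrArg f (Quotient.sound ⟨⟨p.1, hp⟩, rfl⟩)
        · intro x
          exact congrArg f (Quotient.sound ⟨⟨q.1, hq⟩, rfl⟩)⟩
      invFun := fun i => Quotient.lift i.1 (by
        have key : ∀ g ∈ H, ∀ x, i.1 (g x) = i.1 x := by
          intro g hg
          induction hg using Subgroup.closure_induction with
          | mem g hg =>
            rcases hg with rfl | hg
            · exact i.2.1
            · rw [Set.mem_singleton_iff] at hg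
              subst hg
              exact i.2.2
          | one => intro x; rfl
          | mul a b _ _ ha hb => intro x; rw [Equiv.Perm.mul_apply, ha, hb]
          | inv a _ ha =>
            intro x
            have := ha (a⁻¹ x)
            rw [← Equiv.Perm.mul_apply, mul_inv_cancel] at this
            exact this.symm
        rintro x y ⟨g, rfl⟩
        exact key g.1 g.2 y)
      left_inv := by
        intro f
        funext x
        induction x using Quotient.inductionOn
        rfl
      right_inv := by
        intro i
        rfl }
  rw [← Nat.card_eq_fintype_card, ← Nat.card_congr e, Nat.card_fun]
  simp

theorem gram_eq {k : ℕ} (p q : NCPair k) :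
    Gram k 2 p q = ∑ i, Bf p.1 i * Bf q.1 i := by
  unfold Gram
  have := two_pow_loops p q
  rw [Fintype.card_subtype] at this
  have h2 : ((2 : ℕ) : ℝ) ^ loops p q = (((2 : ℕ) ^ loops p q : ℕ) : ℝ) := by push_cast; rfl
  rw [h2, this, Finset.card_filter]
  push_cast
  refine Finset.sum_congr rfl fun i _ => ?_
  unfold Bf
  by_cases h1 : ∀ x, i (p.1 x) = i x <;> by_cases h2 : ∀ x, i (q.1 x) = i x <;> simp [h1, h2]

/-! ### Parity -/

theorem even_card_of_inv {α : Type*} [DecidableEq α] (s : Finset α) (f : α → α)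
    (h1 : ∀ x ∈ s, f x ∈ s) (h2 : ∀ x, f (f x) = x) (h3 : ∀ x, f x ≠ x) : Even s.card := by
  have : ∑ x ∈ s, (1 : ZMod 2) = 0 :=
    Finset.sum_involution (fun a _ => f a) (fun _ _ => by decide) (fun a _ _ => h3 a)
      (fun a ha => h1 a ha) (fun a _ => h2 a)
  simp only [Finset.sum_const, nsmul_eq_mul, mul_one] at this
  exact (ZMod.natCast_eq_zero_iff_even).1 this

theorem parity_lt {k : ℕ} (p : NCPair k) (x : Fin (2 * k)) (hx : x < p.1 x) :
    (p.1 x).val % 2 ≠ x.val % 2 := by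
  obtain ⟨p, hi, hf, hc⟩ := p
  simp only at *
  have := even_card_of_inv (Finset.Ioo x (p x)) p (by
    intro y hy
    rw [Finset.mem_Ioo] at hy ⊢
    constructor
    · by_contra hcon
      have hne : p y ≠ x := by rintro h; rw [← h, hi] at hy; exact lt_irrefl _ hy.2
      exact hc (p y) x y (p x) (lt_of_le_of_ne (not_lt.1 hcon) hne) hy.1 hy.2 (hi y) rfl
    · by_contra hcon
      have hne : p y ≠ p x := by rintro h; rw [p.injective h] at hy; exact lt_irrefl _ hy.1
      exact hc x y (p x) (p y) hy.1 hy.2 (lt_of_le_of_ne (not_lt.1 hcon) hne.symm) rfl rfl) hi hf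
  rw [Fin.card_Ioo] at this
  obtain ⟨r, hr⟩ := this
  have : x.val < (p x).val := hx
  omega

theorem parity {k : ℕ} (p : NCPair k) (x : Fin (2 * k)) :
    (p.1 x).val % 2 ≠ x.val % 2 := by
  rcases lt_trichotomy x (p.1 x) with h | h | h
  · exact parity_lt p x h
  · exact absurd h.symm (p.2.2.1 x)
  · have := parity_lt p (p.1 x) (by rw [p.2.1]; exact h)
    rw [p.2.1] at this
    exact this.symm

/-! ### Linear independence -/

theorem eq_of_openers {k : ℕ} (p q : NCPair k)
    (h : ∀ a, (a < p.1 a ↔ a < q.1 a)) : p = q := by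
  have key : ∀ (p q : NCPair k), (∀ a, (a < p.1 a ↔ a < q.1 a)) → ∀ c,
      (∀ c' < c, p.1 c' < c' → p.1 c' = q.1 c') → p.1 c < c → p.1 c < q.1 c → q.1 c < c →
      False := by
    intro p q h c ih h1 h2 h3
    have hb : q.1 c < p.1 (q.1 c) := by rw [h, q.2.1]; exact h3
    rcases lt_trichotomy (p.1 (q.1 c)) c with h4 | h4 | h4
    · have := ih _ h4 (by rw [p.2.1]; exact hb)
      rw [p.2.1] at this
      have h5 := congrArg q.1 this
      rw [q.2.1, q.2.1] at h5
      exact absurd h5.symm h4.ne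
    · have := congrArg p.1 h4
      rw [p.2.1] at this
      exact h2.ne this.symm
    · exact p.2.2.2 _ _ _ _ h2 h3 h4 (p.2.1 c) rfl
  have hcl : ∀ a, (p.1 a < a ↔ q.1 a < a) := by
    intro a
    have := h a
    have h1 := p.2.2.1 a
    have h2 := q.2.2.1 a
    constructor <;> intro h3
    · exact lt_of_le_of_ne (not_lt.1 fun h4 => absurd (this.2 h4) (not_lt.2 h3.le)) h2
    · exact lt_of_le_of_ne (not_lt.1 fun h4 => absurd (this.1 h4) (not_lt.2 h3.le)) h1
  have main : ∀ c, p.1 c < c → p.1 c = q.1 c := by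
    intro c
    induction c using WellFoundedLT.induction with
    | ind c ih =>
      intro h1
      rcases lt_trichotomy (p.1 c) (q.1 c) with h2 | h2 | h2
      · exact (key p q h c ih h1 h2 ((hcl c).1 h1)).elim
      · exact h2
      · exact (key q p (fun a => (h a).symm) c
          (fun c' hc' h' => (ih c' hc' ((hcl c').2 h')).symm) ((hcl c).1 h1) h2 h1).elim
  apply Subtype.ext
  ext1 c
  rcases lt_trichotomy (p.1 c) c with h1 | h1 | h1
  · exact main c h1
  · exact absurd h1 (p.2.2.1 c)
  · have := main (p.1 c) (by rw [p.2.1]; exact h1)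
    rw [p.2.1] at this
    have h5 := congrArg q.1 this
    rw [q.2.1] at h5
    exact h5.symm

/-- Sum of the positions of the openers. -/
def opSum {k : ℕ} (p : NCPair k) : ℕ := ∑ a, if a < p.1 a then a.val else 0

theorem two_mul_opSum {k : ℕ} (p q : NCPair k) :
    2 * opSum p = ∑ a, ((if a < p.1 a then a.val else 0) +
      (if q.1 a < p.1 (q.1 a) then (q.1 a).val else 0)) := by
  rw [Finset.sum_add_distrib, Equiv.sum_comp q.1 (fun a => if a < p.1 a then a.val else 0),
    opSum, two_mul]

theorem opSum_lt {k : ℕ} (p q : NCPair k) (hpq : p ≠ q)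
    (h : ∀ a, (a < p.1 a ↔ ¬ q.1 a < p.1 (q.1 a))) : opSum q < opSum p := by
  have hle : ∀ a ∈ Finset.univ, ((if a < q.1 a then a.val else 0) +
      (if q.1 a < q.1 (q.1 a) then (q.1 a).val else 0)) ≤ ((if a < p.1 a then a.val else 0) +
      (if q.1 a < p.1 (q.1 a) then (q.1 a).val else 0)) := by
    intro a _
    have h1 := h a
    have h2 := q.2.2.1 a
    rw [q.2.1]
    simp only [Fin.lt_def, Fin.ext_iff, ne_eq] at *
    split_ifs <;> omega
  have h2 : 2 * opSum q ≤ 2 * opSum p := by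
    rw [two_mul_opSum p q, two_mul_opSum q q]
    exact Finset.sum_le_sum hle
  by_contra hcon
  have h3 : 2 * opSum q = 2 * opSum p := by omega
  rw [two_mul_opSum p q, two_mul_opSum q q, Finset.sum_eq_sum_iff_of_le hle] at h3
  apply hpq
  apply eq_of_openers
  intro a
  have h1 := h a
  have h4 := q.2.2.1 a
  have h5 := h3 a (Finset.mem_univ _)
  rw [q.2.1] at h5
  simp only [Fin.lt_def, Fin.ext_iff, ne_eq] at *
  split_ifs at h5 <;> omega

/-- The test word of `p`. -/
def word {k : ℕ} (p : NCPair k) : Fin (2 * k) → Bool :=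
  fun a => xor (decide (a < p.1 a)) (decide (a.val % 2 = 0))

theorem Bf_word {k : ℕ} (p q : NCPair k) :
    (∀ x, word p (q.1 x) = word p x) ↔ ∀ a, (a < p.1 a ↔ ¬ q.1 a < p.1 (q.1 a)) := by
  refine forall_congr' fun a => ?_
  have h1 := parity q a
  unfold word
  by_cases h2 : a.val % 2 = 0
  · have h3 : ¬ (q.1 a).val % 2 = 0 := by omega
    by_cases h4 : a < p.1 a <;> by_cases h5 : q.1 a < p.1 (q.1 a) <;> simp [h2, h3, h4, h5]
  · have h3 : (q.1 a).val % 2 = 0 := by omega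
    by_cases h4 : a < p.1 a <;> by_cases h5 : q.1 a < p.1 (q.1 a) <;> simp [h2, h3, h4, h5]

theorem Bf_indep {k : ℕ} (c : NCPair k → ℝ) (hc : ∀ i, ∑ q, c q * Bf q.1 i = 0) : c = 0 := by
  classical
  by_contra hne
  obtain ⟨p0, hp0⟩ := Function.ne_iff.1 hne
  obtain ⟨p, hp, hmin⟩ := Finset.exists_min_image (Finset.univ.filter fun p => c p ≠ 0) opSum
    ⟨p0, by simpa using hp0⟩
  simp only [Finset.mem_filter, Finset.mem_univ, true_and] at hp hmin
  have h := hc (word p)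
  rw [Finset.sum_eq_single p] at h
  · unfold Bf at h
    rw [if_pos] at h
    · simp at h; exact hp h
    · rw [Bf_word]
      intro a
      rw [p.2.1]
      have := p.2.2.1 a
      exact ⟨fun h => not_lt.2 h.le, fun h => lt_of_le_of_ne (not_lt.1 h) this.symm⟩
  · intro q _ hq
    by_cases hcq : c q = 0
    · simp [hcq]
    · unfold Bf
      rw [if_neg, mul_zero]
      rw [Bf_word]
      intro h'
      exact absurd (opSum_lt p q hq.symm h') (not_lt.2 (hmin q hcq))
  · simp

theorem gram_unit (k : ℕ) : IsUnit (Gram k 2) := by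
  rw [← Matrix.mulVec_injective_iff_isUnit]
  change Function.Injective (Gram k 2).mulVecLin
  rw [injective_iff_map_eq_zero (Gram k 2).mulVecLin]
  intro c hc
  rw [Matrix.mulVecLin_apply] at hc
  apply Bf_indep
  have h0 : ∑ i, (∑ q, c q * Bf q.1 i) * (∑ q, c q * Bf q.1 i) = 0 := by
    have : ∑ p, c p * ((Gram k 2).mulVec c) p = 0 := by simp [hc]
    rw [← this]
    simp only [Matrix.mulVec, dotProduct, gram_eq, Finset.sum_mul, Finset.mul_sum]
    rw [Finset.sum_comm]
    refine Finset.sum_congr rfl fun p _ => ?_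
    rw [Finset.sum_comm]
    refine Finset.sum_congr rfl fun q _ => ?_
    refine Finset.sum_congr rfl fun i _ => ?_
    ring
  intro i
  have := (Finset.sum_eq_zero_iff_of_nonneg (fun i _ => mul_self_nonneg _)).1 h0 i
    (Finset.mem_univ _)
  exact mul_self_eq_zero.1 this

/-! ### Uncrossing -/

/-- First coordinate of the spinor attached to `x`. -/
noncomputable def al {k : ℕ} (i : Fin (2 * k) → Bool) (x : Fin (2 * k)) : ℝ :=
  if x.val % 2 = 0 then (if i x then 0 else 1) else (if i x then 1 else 0)

/-- Second coordinate of the spinor attached to `x`. -/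
noncomputable def be {k : ℕ} (i : Fin (2 * k) → Bool) (x : Fin (2 * k)) : ℝ :=
  if x.val % 2 = 0 then (if i x then -1 else 0) else (if i x then 0 else 1)

/-- Determinant of two spinors. -/
noncomputable def Hf {k : ℕ} (i : Fin (2 * k) → Bool) (x y : Fin (2 * k)) : ℝ :=
  if x < y then al i x * be i y - be i x * al i y else 1

/-- Signed pairing vector. -/
noncomputable def Vf {k : ℕ} (p : Equiv.Perm (Fin (2 * k))) : (Fin (2 * k) → Bool) → ℝ :=
  fun i => ∏ x, Hf i x (p x)

@[to_additive]
theorem prod_split4 {α M : Type*} [Fintype α] [DecidableEq α] [CommMonoid M]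
    (F : α → M) (a b c d : α) (hab : a ≠ b) (hac : a ≠ c) (had : a ≠ d)
    (hbc : b ≠ c) (hbd : b ≠ d) (hcd : c ≠ d) :
    ∏ x, F x = (∏ x ∈ ({a, b, c, d} : Finset α)ᶜ, F x) * (F a * (F b * (F c * F d))) := by
  rw [← Finset.prod_compl_mul_prod ({a, b, c, d} : Finset α) F]
  rw [Finset.prod_insert (by simp [hab, hac, had]), Finset.prod_insert (by simp [hbc, hbd]),
    Finset.prod_insert (by simp [hcd]), Finset.prod_singleton]

/-- A concave increasing weight. -/
def gw (k x : ℕ) : ℕ := x * (4 * k - x)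

theorem gw_one (k x y z : ℕ) (hy : 0 < y) (hx : 0 < x) (h : x + y + z ≤ 2 * k) :
    gw k x + gw k z < gw k (x + y) + gw k (y + z) := by
  unfold gw
  zify [show x ≤ 4 * k by omega, show z ≤ 4 * k by omega, show x + y ≤ 4 * k by omega,
    show y + z ≤ 4 * k by omega]
  zify at hy hx h
  nlinarith [mul_nonneg hy.le (sub_nonneg.2 h), mul_pos hx hy, mul_pos hy hy]

theorem gw_two (k x y z : ℕ) (hx : 0 < x) (hz : 0 < z) (h : x + y + z ≤ 2 * k) :
    gw k (x + y + z) + gw k y < gw k (x + y) + gw k (y + z) := by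
  unfold gw
  zify [show x + y + z ≤ 4 * k by omega, show y ≤ 4 * k by omega, show x + y ≤ 4 * k by omega,
    show y + z ≤ 4 * k by omega]
  zify at hx hz h
  nlinarith [mul_pos hx hz]

/-- Weight of one pair. -/
def wt {k : ℕ} (x y : Fin (2 * k)) : ℕ := if x < y then gw k (y.val - x.val) else 0

/-- Total weight of a pairing. -/
def Ps {k : ℕ} (p : Equiv.Perm (Fin (2 * k))) : ℕ := ∑ x, wt x (p x)

theorem swap_conj_pairing {α : Type*} [DecidableEq α] (p : Equiv.Perm α) (hi : ∀ x, p (p x) = x)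
    (hf : ∀ x, p x ≠ x) (u v : α) :
    (∀ x, (Equiv.swap u v * p * Equiv.swap u v) ((Equiv.swap u v * p * Equiv.swap u v) x) = x) ∧
    (∀ x, (Equiv.swap u v * p * Equiv.swap u v) x ≠ x) := by
  constructor
  · intro x
    simp [Equiv.Perm.mul_apply, hi]
  · intro x h
    simp only [Equiv.Perm.mul_apply] at h
    apply hf (Equiv.swap u v x)
    have := congrArg (Equiv.swap u v) h
    rwa [Equiv.swap_apply_self] at this

theorem Vf_mem {k : ℕ} : ∀ (n : ℕ) (p : Equiv.Perm (Fin (2 * k))), Ps p = n →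
    (∀ x, p (p x) = x) → (∀ x, p x ≠ x) →
    Vf p ∈ Submodule.span ℝ (Set.range fun q : NCPair k => Vf q.1) := by
  intro n
  induction n using Nat.strong_induction_on with
  | _ n ih =>
  intro p hn hi hf
  by_cases hc : ∀ a b c d : Fin (2 * k), a < b → b < c → c < d → p a = c → p b = d → False
  · exact Submodule.subset_span ⟨⟨p, hi, hf, hc⟩, rfl⟩
  push Not at hc
  obtain ⟨a, b, c, d, hab, hbc, hcd, pa, pb, -⟩ := hc
  have pc : p c = a := by rw [← pa, hi]
  have pd : p d = b := by rw [← pb, hi]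
  have hac := hab.trans hbc
  have hbd := hbc.trans hcd
  have had := hac.trans hcd
  obtain ⟨i1, f1⟩ := swap_conj_pairing p hi hf b c
  obtain ⟨i2, f2⟩ := swap_conj_pairing p hi hf c d
  set p1 := Equiv.swap b c * p * Equiv.swap b c with hp1
  set p2 := Equiv.swap c d * p * Equiv.swap c d with hp2
  have p1b : p1 b = a := by simp [hp1, pc, Equiv.swap_apply_of_ne_of_ne hab.ne hac.ne]
  have p1c : p1 c = d := by simp [hp1, pb, Equiv.swap_apply_of_ne_of_ne hbd.ne' hcd.ne']
  have p1a : p1 a = b := by rw [← p1b, i1]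
  have p1d : p1 d = c := by rw [← p1c, i1]
  have p2c : p2 c = b := by simp [hp2, pd, Equiv.swap_apply_of_ne_of_ne hbc.ne hbd.ne]
  have p2d : p2 d = a := by simp [hp2, pc, Equiv.swap_apply_of_ne_of_ne hac.ne had.ne]
  have p2b : p2 b = c := by rw [← p2c, i2]
  have p2a : p2 a = d := by rw [← p2d, i2]
  have hout : ∀ x ∈ ({a, b, c, d} : Finset (Fin (2 * k)))ᶜ, p1 x = p x ∧ p2 x = p x := by
    intro x hx
    simp only [Finset.mem_compl, Finset.mem_insert, Finset.mem_singleton, not_or] at hx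
    obtain ⟨xa, xb, xc, xd⟩ := hx
    have ya : p x ≠ a := fun h => xc (by rw [← pa, ← h, hi])
    have yb : p x ≠ b := fun h => xd (by rw [← pb, ← h, hi])
    have yc : p x ≠ c := fun h => xa (by rw [← pc, ← h, hi])
    have yd : p x ≠ d := fun h => xb (by rw [← pd, ← h, hi])
    constructor
    · simp [hp1, Equiv.swap_apply_of_ne_of_ne xb xc, Equiv.swap_apply_of_ne_of_ne yb yc]
    · simp [hp2, Equiv.swap_apply_of_ne_of_ne xc xd, Equiv.swap_apply_of_ne_of_ne yc yd]
  have hd := d.isLt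
  have l1 : a.val < b.val := hab
  have l2 : b.val < c.val := hbc
  have l3 : c.val < d.val := hcd
  have hP : ∀ r : Equiv.Perm (Fin (2 * k)), (∀ x ∈ ({a, b, c, d} : Finset (Fin (2 * k)))ᶜ,
      r x = p x) → Ps r = (∑ x ∈ ({a, b, c, d} : Finset (Fin (2 * k)))ᶜ, wt x (p x)) +
        (wt a (r a) + (wt b (r b) + (wt c (r c) + wt d (r d)))) := by
    intro r hr
    unfold Ps
    rw [sum_split4 _ a b c d hab.ne hac.ne had.ne hbc.ne hbd.ne hcd.ne]
    congr 1
    exact Finset.sum_congr rfl fun x hx => by rw [hr x hx]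
  have hV : ∀ r : Equiv.Perm (Fin (2 * k)), (∀ x ∈ ({a, b, c, d} : Finset (Fin (2 * k)))ᶜ,
      r x = p x) → ∀ i, Vf r i = (∏ x ∈ ({a, b, c, d} : Finset (Fin (2 * k)))ᶜ, Hf i x (p x)) *
        (Hf i a (r a) * (Hf i b (r b) * (Hf i c (r c) * Hf i d (r d)))) := by
    intro r hr i
    unfold Vf
    rw [prod_split4 _ a b c d hab.ne hac.ne had.ne hbc.ne hbd.ne hcd.ne]
    congr 1
    exact Finset.prod_congr rfl fun x hx => by rw [hr x hx]
  have hsum : Vf p = Vf p1 + Vf p2 := by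
    funext i
    rw [Pi.add_apply, hV p (fun _ _ => rfl), hV p1 (fun x hx => (hout x hx).1),
      hV p2 (fun x hx => (hout x hx).2), pa, pb, pc, pd, p1a, p1b, p1c, p1d, p2a, p2b, p2c, p2d]
    unfold Hf
    simp only [hab, hac, had, hbc, hbd, hcd, hab.not_gt, hac.not_gt, had.not_gt, hbc.not_gt,
      hbd.not_gt, hcd.not_gt, if_true, if_false]
    ring
  have w0 := hP p (fun _ _ => rfl)
  have w1 := hP p1 (fun x hx => (hout x hx).1)
  have w2 := hP p2 (fun x hx => (hout x hx).2)
  rw [pa, pb, pc, pd] at w0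
  rw [p1a, p1b, p1c, p1d] at w1
  rw [p2a, p2b, p2c, p2d] at w2
  simp only [wt, hab, hac, had, hbc, hbd, hcd, hab.not_gt, hac.not_gt, had.not_gt, hbc.not_gt,
      hbd.not_gt, hcd.not_gt, if_true, if_false] at w0 w1 w2
  have g1 := gw_one k (b.val - a.val) (c.val - b.val) (d.val - c.val) (by omega) (by omega)
    (by omega)
  have g2 := gw_two k (b.val - a.val) (c.val - b.val) (d.val - c.val) (by omega) (by omega)
    (by omega)
  rw [show b.val - a.val + (c.val - b.val) = c.val - a.val by omega,
    show c.val - b.val + (d.val - c.val) = d.val - b.val by omega] at g1 g2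
  rw [show c.val - a.val + (d.val - c.val) = d.val - a.val by omega] at g2
  rw [hsum]
  exact Submodule.add_mem _ (ih _ (by omega) p1 rfl i1 f1) (ih _ (by omega) p2 rfl i2 f2)

/-- The sign of a bipartite pairing. -/
noncomputable def cf {k : ℕ} (p : Equiv.Perm (Fin (2 * k))) : ℝ :=
  ∏ x, if x < p x then (if x.val % 2 = 0 then 1 else -1) else 1

theorem cf_sq {k : ℕ} (p : Equiv.Perm (Fin (2 * k))) : cf p * cf p = 1 := by
  unfold cf
  rw [← Finset.prod_mul_distrib]
  apply Finset.prod_eq_one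
  intro x _
  split_ifs <;> norm_num

theorem Vf_eq {k : ℕ} (p : Equiv.Perm (Fin (2 * k))) (hi : ∀ x, p (p x) = x)
    (hp : ∀ x, (p x).val % 2 ≠ x.val % 2) : Vf p = cf p • Bf p := by
  have hH : ∀ (i : Fin (2 * k) → Bool) x, x < p x → al i x * be i (p x) - be i x * al i (p x) =
      if i (p x) = i x then (if x.val % 2 = 0 then 1 else -1) else 0 := by
    intro i x _
    have h1 := hp x
    unfold al be
    by_cases h2 : x.val % 2 = 0
    · have h3 : ¬ (p x).val % 2 = 0 := by omega
      cases h4 : i x <;> cases h5 : i (p x) <;> simp [h2, h3]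
    · have h3 : (p x).val % 2 = 0 := by omega
      cases h4 : i x <;> cases h5 : i (p x) <;> simp [h2, h3]
  funext i
  rw [Pi.smul_apply, smul_eq_mul]
  unfold Bf
  split_ifs with h
  · rw [mul_one]
    unfold Vf cf Hf
    refine Finset.prod_congr rfl fun x _ => ?_
    by_cases hx : x < p x
    · rw [if_pos hx, if_pos hx, hH i x hx, if_pos (h x)]
    · rw [if_neg hx, if_neg hx]
  · rw [mul_zero]
    push Not at h
    obtain ⟨x, hx⟩ := h
    have main : ∀ x, x < p x → i (p x) ≠ i x → Vf p i = 0 := by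
      intro x hx hne
      apply Finset.prod_eq_zero (Finset.mem_univ x)
      unfold Hf
      rw [if_pos hx, hH i x hx, if_neg hne]
    rcases lt_trichotomy x (p x) with h1 | h1 | h1
    · exact main x h1 hx
    · exact absurd (by rw [← h1]) hx
    · exact main (p x) (by rwa [hi]) (by rw [hi]; exact hx.symm)

theorem Bf_mem {k : ℕ} (p : Equiv.Perm (Fin (2 * k))) (hi : ∀ x, p (p x) = x)
    (hp : ∀ x, (p x).val % 2 ≠ x.val % 2) :
    Bf p ∈ Submodule.span ℝ (Set.range fun q : NCPair k => Bf q.1) := by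
  have h1 := Vf_mem _ p rfl hi (fun x h => hp x (by rw [h]))
  have h2 : Bf p = cf p • Vf p := by rw [Vf_eq p hi hp, smul_smul, cf_sq, one_smul]
  rw [h2]
  apply Submodule.smul_mem
  refine Submodule.span_le.2 ?_ h1
  rintro _ ⟨q, rfl⟩
  simp only [Vf_eq q.1 q.2.1 (parity q)]
  exact Submodule.smul_mem _ _ (Submodule.subset_span ⟨q, rfl⟩)

/-! ### Bipartite pairings from permutations -/

/-- Even/odd splitting of `Fin (2 * k)`. -/
def eo (k : ℕ) : Fin k ⊕ Fin k ≃ Fin (2 * k) where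
  toFun := Sum.elim (fun m => ⟨2 * m.val, by omega⟩) (fun m => ⟨2 * m.val + 1, by omega⟩)
  invFun x := if x.val % 2 = 0 then Sum.inl ⟨x.val / 2, by omega⟩ else Sum.inr ⟨x.val / 2, by omega⟩
  left_inv := by
    rintro (m | m)
    · simp
    · have h1 : (2 * m.val + 1) % 2 = 1 := by omega
      have h2 : (2 * m.val + 1) / 2 = m.val := by omega
      simp [h1, h2]
  right_inv := by
    intro x
    by_cases h : x.val % 2 = 0
    · simp only [h, if_true, Sum.elim_inl]
      apply Fin.ext
      simp only
      omega
    · simp only [h, if_false, Sum.elim_inr]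
      apply Fin.ext
      simp only
      omega

/-- The bipartite pairing of a permutation, on the sum type. -/
def bp {k : ℕ} (s : Equiv.Perm (Fin k)) : Equiv.Perm (Fin k ⊕ Fin k) where
  toFun := Sum.elim (fun m => Sum.inr (s m)) (fun m => Sum.inl (s.symm m))
  invFun := Sum.elim (fun m => Sum.inr (s m)) (fun m => Sum.inl (s.symm m))
  left_inv := by rintro (m | m) <;> simp
  right_inv := by rintro (m | m) <;> simp

/-- The bipartite pairing of a permutation. -/
def ps {k : ℕ} (s : Equiv.Perm (Fin k)) : Equiv.Perm (Fin (2 * k)) :=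
  (eo k).symm.trans ((bp s).trans (eo k))

theorem ps_inv {k : ℕ} (s : Equiv.Perm (Fin k)) (x) : ps s (ps s x) = x := by
  obtain ⟨y, rfl⟩ := (eo k).surjective x
  rcases y with m | m <;> simp [ps, bp]

theorem ps_par {k : ℕ} (s : Equiv.Perm (Fin k)) (x) : (ps s x).val % 2 ≠ x.val % 2 := by
  obtain ⟨y, rfl⟩ := (eo k).surjective x
  rcases y with m | m
  · simp [ps, bp, eo]
  · simp [ps, bp, eo]

theorem exists_ps {k : ℕ} (p : Equiv.Perm (Fin (2 * k))) (hi : ∀ x, p (p x) = x)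
    (hp : ∀ x, (p x).val % 2 ≠ x.val % 2) : ∃ s, p = ps s := by
  have h1 : ∀ m, ∃ n, p (eo k (Sum.inl m)) = eo k (Sum.inr n) := by
    intro m
    obtain ⟨y, hy⟩ := (eo k).surjective (p (eo k (Sum.inl m)))
    rcases y with n | n
    · exfalso
      apply hp (eo k (Sum.inl m))
      rw [← hy]
      simp [eo]
    · exact ⟨n, hy.symm⟩
  choose f hf using h1
  have finj : Function.Injective f := by
    intro m m' h
    have := hf m
    rw [h, ← hf m'] at this
    simpa using this
  refine ⟨Equiv.ofBijective f (Finite.injective_iff_bijective.1 finj), ?_⟩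
  ext1 x
  obtain ⟨y, rfl⟩ := (eo k).surjective x
  rcases y with m | m
  · simp [ps, bp, hf]
  · obtain ⟨n, rfl⟩ := (Finite.injective_iff_bijective.1 finj).2 m
    rw [← hf n, hi, hf n]
    simp [ps, bp]

theorem Bf_ps {k : ℕ} (s : Equiv.Perm (Fin k)) (g h : Fin k → Bool) :
    Bf (ps s) (fun x => Sum.elim g h ((eo k).symm x)) = if g = h ∘ s then 1 else 0 := by
  unfold Bf
  congr 1
  rw [← (eo k).forall_congr_right, Sum.forall, eq_iff_iff, funext_iff]
  simp only [ps, bp, Equiv.trans_apply, Equiv.symm_apply_apply, Equiv.coe_fn_mk, Sum.elim_inl,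
    Sum.elim_inr, Function.comp]
  constructor
  · rintro ⟨h1, h2⟩ m
    exact (h1 m).symm
  · intro h1
    exact ⟨fun m => (h1 m).symm, fun m => by rw [h1]; simp⟩

/-- Words on `Fin (2 * k)` as pairs of words. -/
def wordEquiv (k : ℕ) : (Fin k → Bool) × (Fin k → Bool) ≃ (Fin (2 * k) → Bool) :=
  (Equiv.sumArrowEquivProdArrow _ _ _).symm.trans (Equiv.arrowCongr (eo k) (Equiv.refl _))

theorem inner_ps {k : ℕ} (s t : Equiv.Perm (Fin k)) :
    ∑ i, Bf (ps t) i * Bf (ps s) i = ∑ h : Fin k → Bool, if h ∘ (s * t⁻¹ : Equiv.Perm (Fin k)) = h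
      then (1 : ℝ) else 0 := by
  rw [← (wordEquiv k).sum_comp, Fintype.sum_prod_type, Finset.sum_comm]
  refine Finset.sum_congr rfl fun h _ => ?_
  have : ∀ g, (wordEquiv k) (g, h) = fun x => Sum.elim g h ((eo k).symm x) := fun g => rfl
  simp only [this, Bf_ps]
  rw [Finset.sum_eq_single (h ∘ t)]
  · rw [if_pos rfl, one_mul]
    congr 1
    rw [eq_iff_iff, funext_iff, funext_iff]
    constructor
    · intro H x
      have := H (t⁻¹ x)
      simp only [Function.comp, Equiv.Perm.mul_apply] at this ⊢
      rw [← this, ← Equiv.Perm.mul_apply, mul_inv_cancel]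
      rfl
    · intro H x
      have := H (t x)
      simp only [Function.comp, Equiv.Perm.mul_apply] at this ⊢
      rw [← this, ← Equiv.Perm.mul_apply t⁻¹, inv_mul_cancel]
      rfl
  · intro g _ hg
    rw [if_neg hg, zero_mul]
  · simp

theorem count_fix (k : ℕ) :
    ∑ s : Equiv.Perm (Fin k), ∑ h : Fin k → Bool, (if h ∘ s = h then (1 : ℝ) else 0) =
      (Nat.factorial (k + 1) : ℝ) := by
  classical
  rw [Finset.sum_comm]
  have h1 : ∀ h : Fin k → Bool, ∑ s : Equiv.Perm (Fin k), (if h ∘ s = h then (1 : ℝ) else 0) =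
      ((fun m => Nat.factorial m * Nat.factorial (k - m))
        ((Finset.univ.filter fun a => h a = true).card) : ℕ) := by
    intro h
    have := DomMulAct.stabilizer_card h
    rw [Fintype.card_subtype] at this
    rw [Finset.sum_boole, this, Fintype.prod_bool, Fintype.card_subtype, Fintype.card_subtype]
    have h2 := Finset.card_filter_add_card_filter_not (s := Finset.univ) (fun a => h a = true)
    simp only [Finset.card_univ, Fintype.card_fin, Bool.not_eq_true] at h2
    congr 3
    omega
  rw [Finset.sum_congr rfl fun h _ => h1 h, ← Nat.cast_sum]
  congr 1
  have h3 : ∑ h : Fin k → Bool, (fun m => Nat.factorial m * Nat.factorial (k - m))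
        ((Finset.univ.filter fun a => h a = true).card) =
      ∑ S : Finset (Fin k), (fun m => Nat.factorial m * Nat.factorial (k - m)) S.card := by
    refine Finset.sum_bij' (fun h _ => Finset.univ.filter fun a => h a = true)
      (fun S _ a => decide (a ∈ S)) ?_ ?_ ?_ ?_ ?_
    · simp
    · simp
    · intro h _; funext a; simp
    · intro S _; ext a; simp
    · simp
  rw [h3, ← Finset.powerset_univ, Finset.sum_powerset_apply_card
    (fun m => Nat.factorial m * Nat.factorial (k - m))]
  rw [Finset.sum_congr rfl (g := fun _ => Nat.factorial k)]
  · simp [Nat.factorial_succ]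
  · intro m hm
    rw [Finset.mem_range] at hm
    simp only [Finset.card_univ, Fintype.card_fin, smul_eq_mul] at hm ⊢
    rw [← mul_assoc, Nat.choose_mul_factorial_mul_factorial (by omega)]

/-- For k ≥ 1, the sum of all entries of the Weingarten matrix W_{k2} = G_{k2}⁻¹
equals 1/(k+1): these are the even moments of a generator of A_o(2). -/
theorem sum_weingarten_two (k : ℕ) (hk : 1 ≤ k) :
    ∑ p : NCPair k, ∑ q : NCPair k, (Gram k 2)⁻¹ p q = 1 / ((k : ℝ) + 1) := by
  have hmem : (∑ s : Equiv.Perm (Fin k), Bf (ps s)) ∈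
      Submodule.span ℝ (Set.range fun q : NCPair k => Bf q.1) :=
    Submodule.sum_mem _ fun s _ => Bf_mem _ (ps_inv s) (ps_par s)
  obtain ⟨c, hc⟩ := (Submodule.mem_span_range_iff_exists_fun ℝ).1 hmem
  have hc' : ∀ i, ∑ q, c q * Bf q.1 i = ∑ s : Equiv.Perm (Fin k), Bf (ps s) i := by
    intro i
    have := congrFun hc i
    simpa [Finset.sum_apply] using this
  have hsum : ∑ q, c q = (Nat.factorial k : ℝ) := by
    have := hc' (fun _ => true)
    simpa [Bf, Fintype.card_perm] using this
  have hG : (Gram k 2).mulVec c = fun _ => (Nat.factorial (k + 1) : ℝ) := by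
    funext p
    simp only [Matrix.mulVec, dotProduct, gram_eq]
    have h1 : ∑ q : NCPair k, (∑ i, Bf p.1 i * Bf q.1 i) * c q =
        ∑ i, Bf p.1 i * ∑ q, c q * Bf q.1 i := by
      simp only [Finset.sum_mul, Finset.mul_sum]
      rw [Finset.sum_comm]
      refine Finset.sum_congr rfl fun i _ => Finset.sum_congr rfl fun q _ => ?_
      ring
    rw [h1]
    simp only [hc', Finset.mul_sum]
    rw [Finset.sum_comm]
    obtain ⟨t, ht⟩ := exists_ps p.1 p.2.1 (parity p)
    rw [ht]
    simp only [inner_ps]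
    rw [← count_fix k]
    exact Equiv.sum_comp (Equiv.mulRight t⁻¹)
      (fun s : Equiv.Perm (Fin k) => ∑ h : Fin k → Bool, (if h ∘ s = h then (1 : ℝ) else 0))
  have hinv : (Gram k 2)⁻¹ * Gram k 2 = 1 :=
    Matrix.nonsing_inv_mul _ ((Matrix.isUnit_iff_isUnit_det _).1 (gram_unit k))
  have h2 : c = (Gram k 2)⁻¹.mulVec (fun _ => (Nat.factorial (k + 1) : ℝ)) := by
    rw [← hG, Matrix.mulVec_mulVec, hinv, Matrix.one_mulVec]
  rw [h2] at hsum
  simp only [Matrix.mulVec, dotProduct, ← Finset.sum_mul] at hsum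
  rw [Nat.factorial_succ] at hsum
  push_cast at hsum
  have hf : (Nat.factorial k : ℝ) ≠ 0 := by exact_mod_cast Nat.factorial_ne_zero k
  have hk1 : (k : ℝ) + 1 ≠ 0 := by positivity
  rw [eq_div_iff hk1]
  apply mul_right_cancel₀ hf
  rw [mul_assoc, hsum, one_mul]
end

section
/- Fix k ≥ 1. For d ∈ ℕ let E^k_d (resp. O^k_d) be the number of paths P = (p₀, p₁, …, p_l) in D(k) of even length l (resp. odd length l), with arbitrary endpoints, consecutive entries distinct, and total distance d(P) = ∑_{i=1}^l d(p_{i−1}, p_i) equal to d (these counts are finite, since every step has distance at least 1). Then there exists n₀ such that for every integer n ≥ n₀: n^k · ∑_{p,q ∈ D(k)} W_{kn}(p,q) = ∑_{d=0}^∞ (E^k_d − O^k_d) · n^{−d}, with the series converging absolutely. -/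
open scoped BigOperators

/-- The distance along a path P = (p₀,…,p_l): d(P) = ∑ d(p_{i-1}, p_i). -/
noncomputable def pathDist {k l : ℕ} (P : Fin (l + 1) → NCPair k) : ℕ :=
  ∑ i : Fin l, loopDist (P i.castSucc) (P i.succ)

/-- Paths in D(k) (arbitrary endpoints, consecutive entries distinct) of
length of given parity and of total distance d. -/
def PathsOfDist (k : ℕ) (par : Bool) (d : ℕ) : Type :=
  {P : Σ l : ℕ, Fin (l + 1) → NCPair k //
    (∀ i : Fin P.1, P.2 i.castSucc ≠ P.2 i.succ) ∧
    (if par then Even P.1 else Odd P.1) ∧ pathDist P.2 = d}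

/-- E^k_d : the number of even-length paths of distance d. -/
noncomputable def Ecount (k d : ℕ) : ℕ := Nat.card (PathsOfDist k true d)

/-- O^k_d : the number of odd-length paths of distance d. -/
noncomputable def Ocount (k d : ℕ) : ℕ := Nat.card (PathsOfDist k false d)

namespace MPS

open Finset

section loops

variable {k : ℕ} (p q : NCPair k)

abbrev Grp : Subgroup (Equiv.Perm (Fin (2 * k))) :=
  Subgroup.closure ({p.1, q.1} : Set (Equiv.Perm (Fin (2 * k))))

abbrev Orb : Type := MulAction.orbitRel.Quotient (↥(Grp p q)) (Fin (2 * k))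

noncomputable instance : Fintype (Orb p q) := Fintype.ofFinite _

noncomputable instance : DecidableEq (Orb p q) := Classical.decEq _

def mkO (x : Fin (2 * k)) : Orb p q := Quotient.mk _ x

lemma mkO_eq (x y : Fin (2 * k)) :
    mkO p q x = mkO p q y ↔ ∃ g ∈ Grp p q, g y = x := by
  unfold mkO
  rw [Quotient.eq, MulAction.orbitRel_apply, MulAction.mem_orbit_iff]
  constructor
  · rintro ⟨g, hg⟩; exact ⟨g.1, g.2, hg⟩
  · rintro ⟨g, hg, h⟩; exact ⟨⟨g, hg⟩, h⟩

lemma mkO_p (x : Fin (2 * k)) : mkO p q (p.1 x) = mkO p q x :=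
  (mkO_eq p q _ _).2 ⟨p.1, Subgroup.subset_closure (by simp), rfl⟩

lemma mkO_q (x : Fin (2 * k)) : mkO p q (q.1 x) = mkO p q x :=
  (mkO_eq p q _ _).2 ⟨q.1, Subgroup.subset_closure (by simp), rfl⟩

noncomputable def fib (w : Orb p q) : Finset (Fin (2 * k)) :=
  Finset.univ.filter (fun x => mkO p q x = w)

lemma sum_fib : ∑ w : Orb p q, (fib p q w).card = 2 * k := by
  have := Finset.card_eq_sum_card_fiberwise (f := mkO p q) (s := Finset.univ)
    (t := Finset.univ) (by intro x _; simp)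
  simp only [Finset.card_univ, Fintype.card_fin] at this
  exact this.symm

lemma two_le_fib (w : Orb p q) : 2 ≤ (fib p q w).card := by
  obtain ⟨x, rfl⟩ : ∃ x, mkO p q x = w := Quotient.exists_rep w
  have h : ({x, p.1 x} : Finset _) ⊆ fib p q (mkO p q x) := by
    intro y hy
    simp only [Finset.mem_insert, Finset.mem_singleton] at hy
    rcases hy with rfl | rfl
    · simp [fib]
    · simp [fib, mkO_p]
  have := Finset.card_le_card h
  rwa [Finset.card_pair (p.2.2.1 x).symm] at this

lemma loops_eq_card : loops p q = Fintype.card (Orb p q) := by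
  unfold loops
  rw [Nat.card_eq_fintype_card]

lemma loops_le : loops p q ≤ k := by
  have h1 := sum_fib p q
  have h2 : ∑ w : Orb p q, 2 ≤ ∑ w : Orb p q, (fib p q w).card :=
    Finset.sum_le_sum (fun w _ => two_le_fib p q w)
  rw [h1] at h2
  simp only [Finset.sum_const, Finset.card_univ, smul_eq_mul] at h2
  rw [loops_eq_card]; omega

lemma loops_lt (hpq : p ≠ q) : loops p q < k := by
  have h1 := sum_fib p q
  have hx : ∃ x, p.1 x ≠ q.1 x := by
    by_contra! h
    exact hpq (Subtype.ext (Equiv.ext h))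
  obtain ⟨x, hx⟩ := hx
  have h3 : 2 < (fib p q (mkO p q x)).card := by
    have h : ({x, p.1 x, q.1 x} : Finset _) ⊆ fib p q (mkO p q x) := by
      intro y hy
      simp only [Finset.mem_insert, Finset.mem_singleton] at hy
      rcases hy with rfl | rfl | rfl
      · simp [fib]
      · simp [fib, mkO_p]
      · simp [fib, mkO_q]
    have := Finset.card_le_card h
    rwa [Finset.card_eq_three.2 ⟨x, p.1 x, q.1 x, (p.2.2.1 x).symm, (q.2.2.1 x).symm, hx, rfl⟩]
      at this
  have h2 : ∑ w : Orb p q, 2 < ∑ w : Orb p q, (fib p q w).card :=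
    Finset.sum_lt_sum (fun w _ => two_le_fib p q w) ⟨_, Finset.mem_univ _, h3⟩
  rw [h1] at h2
  simp only [Finset.sum_const, Finset.card_univ, smul_eq_mul] at h2
  rw [loops_eq_card]; omega

lemma loops_self : loops p p = k := by
  have h1 := sum_fib p p
  have hc : ∀ g ∈ Grp p p, g = 1 ∨ g = p.1 := by
    have hpp : p.1 * p.1 = 1 := Equiv.ext (fun x => p.2.1 x)
    have hinv : p.1⁻¹ = p.1 := inv_eq_of_mul_eq_one_left hpp
    intro g hg
    induction hg using Subgroup.closure_induction with
    | mem x hx => right; simpa using hx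
    | one => left; rfl
    | mul x y _ _ hx hy =>
      rcases hx with rfl | rfl <;> rcases hy with rfl | rfl <;> simp [hpp]
    | inv x _ hx => rcases hx with rfl | rfl <;> simp [hinv]
  have h3 : ∀ w : Orb p p, (fib p p w).card = 2 := by
    intro w
    refine le_antisymm ?_ (two_le_fib p p w)
    obtain ⟨x, rfl⟩ : ∃ x, mkO p p x = w := Quotient.exists_rep w
    have h : fib p p (mkO p p x) ⊆ ({x, p.1 x} : Finset _) := by
      intro y hy
      simp only [fib, Finset.mem_filter, Finset.mem_univ, true_and] at hy
      obtain ⟨g, hg, rfl⟩ := (mkO_eq p p _ _).1 hy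
      rcases hc g hg with rfl | rfl <;> simp
    exact (Finset.card_le_card h).trans Finset.card_le_two
  rw [Finset.sum_congr rfl (fun w _ => h3 w)] at h1
  simp only [Finset.sum_const, Finset.card_univ, smul_eq_mul] at h1
  rw [loops_eq_card]; omega

lemma one_le_dist (hpq : p ≠ q) : 1 ≤ loopDist p q := by
  have := loops_lt p q hpq
  unfold loopDist; omega

end loops

section paths

variable {k : ℕ}

lemma le_pathDist {l : ℕ} (P : Fin (l + 1) → NCPair k)
    (h : ∀ i : Fin l, P i.castSucc ≠ P i.succ) : l ≤ pathDist P := by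
  unfold pathDist
  calc l = ∑ i : Fin l, 1 := by simp
    _ ≤ _ := Finset.sum_le_sum (fun i _ => one_le_dist _ _ (h i))

lemma finite_paths (par : Bool) (d : ℕ) : Finite (PathsOfDist k par d) := by
  have : Finite (Σ l : Fin (d + 1), (Fin (l.1 + 1) → NCPair k)) := inferInstance
  refine Finite.of_injective
    (β := Σ l : Fin (d + 1), (Fin (l.1 + 1) → NCPair k))
    (fun P => ⟨⟨P.1.1, by
      have := le_pathDist P.1.2 P.2.1
      rw [P.2.2.2] at this; omega⟩, P.1.2⟩) ?_
  rintro ⟨⟨l, P⟩, h⟩ ⟨⟨l', P'⟩, h'⟩ hh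
  simp only [Sigma.mk.injEq, Fin.mk.injEq] at hh
  obtain ⟨rfl, hh⟩ := hh
  have := eq_of_heq hh
  subst this
  rfl

end paths

section walk

variable {ι : Type*} [Fintype ι]

lemma walk_succ (A : Matrix ι ι ℝ) (g : ι → ℝ) (l : ℕ) :
    ∑ P : Fin (l + 1 + 1) → ι, (∏ i : Fin (l + 1), A (P i.castSucc) (P i.succ)) * g (P (Fin.last _))
      = ∑ P : Fin (l + 1) → ι, (∏ i : Fin l, A (P i.castSucc) (P i.succ)) *
          (A.mulVec g) (P (Fin.last _)) := by
  rw [← (Fin.snocEquiv (fun _ : Fin (l + 1 + 1) => ι)).sum_comp, Fintype.sum_prod_type,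
    Finset.sum_comm]
  refine Finset.sum_congr rfl (fun P _ => ?_)
  simp only [Matrix.mulVec, dotProduct, Finset.mul_sum]
  refine Finset.sum_congr rfl (fun a _ => ?_)
  rw [Fin.prod_univ_castSucc]
  simp only [Fin.snocEquiv, Equiv.coe_fn_mk, Fin.snoc_castSucc, Fin.snoc_last, Fin.succ_last,
    Fin.succ_castSucc, mul_assoc]

lemma walk_sum [DecidableEq ι] (A : Matrix ι ι ℝ) (l : ℕ) : ∀ (g : ι → ℝ),
    ∑ P : Fin (l + 1) → ι, (∏ i : Fin l, A (P i.castSucc) (P i.succ)) * g (P (Fin.last _))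
      = ∑ p, ((A ^ l).mulVec g) p := by
  induction l with
  | zero =>
    intro g
    rw [← (Equiv.funUnique (Fin 1) ι).symm.sum_comp]
    simp
  | succ l ih =>
    intro g
    rw [walk_succ, ih, Matrix.mulVec_mulVec, pow_succ]

lemma walk_bound (A : Matrix ι ι ℝ) (c : ℝ) (hA : ∀ p q, 0 ≤ A p q) (hc : ∀ p, ∑ q, A p q ≤ c)
    (l : ℕ) :
    ∑ P : Fin (l + 1) → ι, (∏ i : Fin l, A (P i.castSucc) (P i.succ))
      ≤ Fintype.card ι * c ^ l := by
  induction l with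
  | zero => simp
  | succ l ih =>
    have h := walk_succ A (fun _ => 1) l
    simp only [mul_one] at h
    rw [h]
    have hc0 : ∀ P : Fin (l + 1) → ι, 0 ≤ c := fun P =>
      (Finset.sum_nonneg (fun q _ => hA (P 0) q)).trans (hc (P 0))
    calc _ ≤ ∑ P : Fin (l + 1) → ι, (∏ i : Fin l, A (P i.castSucc) (P i.succ)) * c := by
          refine Finset.sum_le_sum (fun P _ => ?_)
          refine mul_le_mul_of_nonneg_left ?_ (Finset.prod_nonneg (fun i _ => hA _ _))
          simpa [Matrix.mulVec, dotProduct] using hc _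
      _ = (∑ P : Fin (l + 1) → ι, (∏ i : Fin l, A (P i.castSucc) (P i.succ))) * c := by
          rw [Finset.sum_mul]
      _ ≤ _ := by
          rw [pow_succ, ← mul_assoc]
          by_cases hne : Nonempty (Fin (l + 1) → ι)
          · exact mul_le_mul_of_nonneg_right ih (hc0 hne.some)
          · have : IsEmpty ι := by
              by_contra hh
              rw [not_isEmpty_iff] at hh
              exact hne ⟨fun _ => hh.some⟩
            simp

open scoped Matrix.Norms.Operator in
lemma neumann [DecidableEq ι] (A : Matrix ι ι ℝ) (c : ℝ) (hc1 : c < 1) (hc0 : 0 ≤ c)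
    (hc : ∀ p, ∑ q, |A p q| ≤ c) :
    (1 - A)⁻¹ * (1 - A) = 1 ∧
    ∀ p q, HasSum (fun l : ℕ => (A ^ l) p q) ((1 - A)⁻¹ p q) := by
  have hn : ‖A‖ < 1 := by
    refine lt_of_le_of_lt ?_ hc1
    rw [Matrix.linfty_opNorm_def]
    have : (Finset.univ.sup fun i => ∑ j, ‖A i j‖₊) ≤ (⟨c, hc0⟩ : NNReal) := by
      refine Finset.sup_le (fun p _ => ?_)
      refine NNReal.coe_le_coe.1 ?_
      have h := hc p
      rw [NNReal.coe_sum]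
      exact h
    exact_mod_cast this
  have hs : Summable (fun l : ℕ => A ^ l) := summable_geometric_of_norm_lt_one hn
  have h1 : (∑' l : ℕ, A ^ l) * (1 - A) = 1 := hs.tsum_pow_mul_one_sub
  have h2 : (1 - A)⁻¹ = ∑' l : ℕ, A ^ l := Matrix.inv_eq_left_inv h1
  refine ⟨by rw [h2, h1], fun p q => ?_⟩
  rw [h2]
  have h3 := hs.hasSum
  exact (Pi.hasSum.1 (Pi.hasSum.1 h3 p) q)

end walk

section main

variable (k : ℕ) (x : ℝ)

noncomputable def Mx : Matrix (NCPair k) (NCPair k) ℝ :=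
  fun p q => if p = q then 0 else x ^ loopDist p q

lemma Mx_nonneg (hx : 0 ≤ x) (p q) : 0 ≤ Mx k x p q := by
  unfold Mx; split_ifs
  · rfl
  · positivity

lemma Mx_row (hx : 0 ≤ x) (hx1 : x ≤ 1) (p) :
    ∑ q, Mx k x p q ≤ Fintype.card (NCPair k) * x := by
  calc _ ≤ ∑ q : NCPair k, x := by
        refine Finset.sum_le_sum (fun q _ => ?_)
        unfold Mx; split_ifs with h
        · exact hx
        · exact pow_le_of_le_one hx hx1 (by have := one_le_dist p q h; omega)
    _ = _ := by simp

lemma gram_eq (n : ℕ) (hn : n ≠ 0) :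
    Gram k n = ((n : ℝ) ^ k) • (1 - (-(Mx k (n : ℝ)⁻¹))) := by
  have hn' : (n : ℝ) ≠ 0 := by exact_mod_cast hn
  ext p q
  rw [sub_neg_eq_add, Matrix.smul_apply, Matrix.add_apply, smul_eq_mul]
  change (n : ℝ) ^ loops p q = (n : ℝ) ^ k * ((1 : Matrix (NCPair k) (NCPair k) ℝ) p q +
    if p = q then 0 else ((n : ℝ)⁻¹) ^ loopDist p q)
  by_cases h : p = q
  · subst h; simp [loops_self]
  · rw [Matrix.one_apply_ne h, if_neg h, zero_add]
    have hl := loops_le p q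
    unfold loopDist
    obtain ⟨m, hm⟩ := Nat.exists_eq_add_of_le hl
    have : k - loops p q = m := by omega
    rw [this]
    conv_rhs => rw [hm, pow_add]
    rw [mul_assoc, ← mul_pow, mul_inv_cancel₀ hn', one_pow, mul_one]

abbrev Paths : Type := Σ l : ℕ, (Fin (l + 1) → NCPair k)

def Adm (P : Paths k) : Prop := ∀ i : Fin P.1, P.2 i.castSucc ≠ P.2 i.succ

noncomputable def wt (P : Paths k) : ℝ := ∏ i : Fin P.1, Mx k x (P.2 i.castSucc) (P.2 i.succ)

open Classical in
lemma wt_eq (P : Paths k) : wt k x P = if Adm k P then x ^ pathDist P.2 else 0 := by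
  unfold wt
  split_ifs with h
  · unfold pathDist
    rw [← Finset.prod_pow_eq_pow_sum]
    refine Finset.prod_congr rfl (fun i _ => ?_)
    unfold Mx
    rw [if_neg (h i)]
  · unfold Adm at h
    push Not at h
    obtain ⟨i, hi⟩ := h
    exact Finset.prod_eq_zero (Finset.mem_univ i) (by simp [Mx, hi])

def Par (par : Bool) (l : ℕ) : Prop := if par then Even l else Odd l

open Classical in
noncomputable def gp (par : Bool) (P : Paths k) : ℝ := if Par par P.1 then wt k x P else 0

variable {k x}

lemma wt_summable (hx : 0 ≤ x) (hx1 : x ≤ 1) (hc : Fintype.card (NCPair k) * x < 1) :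
    Summable (wt k x) := by
  have h0 : ∀ P, 0 ≤ wt k x P := fun P => Finset.prod_nonneg (fun i _ => Mx_nonneg k x hx _ _)
  rw [summable_sigma_of_nonneg h0]
  refine ⟨fun l => (hasSum_fintype _).summable, ?_⟩
  refine Summable.of_nonneg_of_le (fun l => tsum_nonneg (fun P => h0 _)) (fun l => ?_)
    ((summable_geometric_of_lt_one (r := Fintype.card (NCPair k) * x) (by positivity) hc).mul_left
      (Fintype.card (NCPair k) : ℝ))
  rw [tsum_fintype]
  exact walk_bound (Mx k x) _ (Mx_nonneg k x hx) (Mx_row k x hx hx1) l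

lemma gp_summable (hx : 0 ≤ x) (hx1 : x ≤ 1) (hc : Fintype.card (NCPair k) * x < 1)
    (par : Bool) : Summable (gp k x par) := by
  have h0 : ∀ P, 0 ≤ wt k x P := fun P => Finset.prod_nonneg (fun i _ => Mx_nonneg k x hx _ _)
  refine Summable.of_nonneg_of_le (fun P => ?_) (fun P => ?_) (wt_summable hx hx1 hc)
  · unfold gp; split_ifs; exacts [h0 P, le_rfl]
  · unfold gp; split_ifs; exacts [le_rfl, h0 P]

lemma count_hasSum (hx : 0 ≤ x) (hx1 : x ≤ 1) (hc : Fintype.card (NCPair k) * x < 1)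
    (par : Bool) :
    HasSum (fun d : ℕ => (Nat.card (PathsOfDist k par d) : ℝ) * x ^ d) (∑' P, gp k x par P) := by
  have h := (gp_summable hx hx1 hc par).hasSum
  let e : (Σ d : ℕ, PathsOfDist k par d) → Paths k := fun s => s.2.1
  have he : Function.Injective e := by
    rintro ⟨d, P, hP⟩ ⟨d', P', hP'⟩ hh
    change P = P' at hh
    subst hh
    obtain rfl : d = d' := hP.2.2.symm.trans hP'.2.2
    rfl
  have hr : ∀ P, P ∉ Set.range e → gp k x par P = 0 := by
    intro P hP
    unfold gp
    split_ifs with h1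
    · rw [wt_eq, if_neg]
      intro h2
      exact hP ⟨⟨pathDist P.2, ⟨P, h2, h1, rfl⟩⟩, rfl⟩
    · rfl
  rw [← he.hasSum_iff hr] at h
  refine h.sigma (fun d => ?_)
  have := finite_paths (k := k) par d
  have := Fintype.ofFinite (PathsOfDist k par d)
  have h3 : ∀ P : PathsOfDist k par d, (gp k x par ∘ e) ⟨d, P⟩ = x ^ d := by
    intro P
    have h1 : Par par P.1.1 := P.2.2.1
    have h2 : Adm k P.1 := P.2.1
    simp only [Function.comp, gp, e, wt_eq]
    rw [if_pos h1, if_pos h2, P.2.2.2]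
  simp only [h3]
  convert hasSum_fintype (fun _ : PathsOfDist k par d => x ^ d) using 1
  simp [Nat.card_eq_fintype_card]

lemma total (hx : 0 ≤ x) (hx1 : x ≤ 1) (hc : Fintype.card (NCPair k) * x < 1) :
    ∑ p, ∑ q, (1 - (-(Mx k x)))⁻¹ p q = ∑' P, gp k x true P - ∑' P, gp k x false P := by
  have h1 := ((gp_summable hx hx1 hc true).hasSum.sub (gp_summable hx hx1 hc false).hasSum)
  have h2 := h1.sigma (fun l => hasSum_fintype _)
  have hN := (neumann (-(Mx k x)) _ hc (by positivity) (fun p => by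
    refine le_trans (le_of_eq ?_) (Mx_row k x hx hx1 p)
    exact Finset.sum_congr rfl (fun q _ => by
      rw [Matrix.neg_apply, abs_neg, abs_of_nonneg (Mx_nonneg k x hx p q)]))).2
  have h3 : HasSum (fun l : ℕ => ∑ p, ∑ q, ((-(Mx k x)) ^ l) p q) _ :=
    hasSum_sum (fun p _ => hasSum_sum (fun q _ => hN p q))
  refine h3.unique ?_
  suffices hfun : (fun l : ℕ => ∑ p, ∑ q, ((-(Mx k x)) ^ l) p q)
      = fun l : ℕ => ∑ b : Fin (l + 1) → NCPair k,
        (gp k x true ⟨l, b⟩ - gp k x false ⟨l, b⟩) by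
    rw [hfun]; exact h2
  funext l
  have h4 := walk_sum (-(Mx k x)) l (fun _ => 1)
  simp only [mul_one, Matrix.mulVec, dotProduct] at h4
  rw [← h4]
  refine Finset.sum_congr rfl (fun P _ => ?_)
  simp only [Matrix.neg_apply, Finset.prod_neg, Finset.card_univ, Fintype.card_fin, gp, wt, Par]
  rcases Nat.even_or_odd l with hl | hl
  · have : ¬ Odd l := by simpa using hl
    simp [hl, this]
  · have : ¬ Even l := by simpa using hl
    simp [hl, this]

end main

end MPS

/-- The counts E^k_d, O^k_d are finite and, for n large enough, the moments of
n^{1/2} u₁₁ admit the absolutely convergent expansion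
n^k ∑_{p,q} W_{kn}(p,q) = ∑_{d=0}^∞ (E^k_d − O^k_d) n^{−d}. -/
theorem moment_path_series (k : ℕ) (hk : 1 ≤ k) :
    (∀ par : Bool, ∀ d : ℕ, Finite (PathsOfDist k par d)) ∧
    ∃ n₀ : ℕ, ∀ n : ℕ, n₀ ≤ n →
      Summable (fun d : ℕ => |((Ecount k d : ℝ) - Ocount k d) * ((n : ℝ)⁻¹) ^ d|) ∧
      (n : ℝ) ^ k * ∑ p : NCPair k, ∑ q : NCPair k, (Gram k n)⁻¹ p q
        = ∑' d : ℕ, ((Ecount k d : ℝ) - Ocount k d) * ((n : ℝ)⁻¹) ^ d := by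
  refine ⟨fun par d => MPS.finite_paths par d, Fintype.card (NCPair k) + 1, fun n hn => ?_⟩
  have hn0 : n ≠ 0 := by omega
  have hnpos : (0 : ℝ) < n := by exact_mod_cast Nat.pos_of_ne_zero hn0
  have hx : (0 : ℝ) ≤ (n : ℝ)⁻¹ := by positivity
  have hx1 : (n : ℝ)⁻¹ ≤ 1 := inv_le_one_of_one_le₀ (by exact_mod_cast Nat.pos_of_ne_zero hn0)
  have hc : Fintype.card (NCPair k) * (n : ℝ)⁻¹ < 1 := by
    rw [← div_eq_mul_inv, div_lt_one hnpos]
    exact_mod_cast hn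
  have hE := MPS.count_hasSum hx hx1 hc true
  have hO := MPS.count_hasSum hx hx1 hc false
  have hs := hE.sub hO
  simp only [← sub_mul] at hs
  refine ⟨hs.summable.abs, ?_⟩
  refine Eq.trans ?_ hs.tsum_eq.symm
  rw [← MPS.total hx hx1 hc, MPS.gram_eq k n hn0]
  have hnk : ((n : ℝ) ^ k) ≠ 0 := by positivity
  have hL := (MPS.neumann (-(MPS.Mx k (n : ℝ)⁻¹)) _ hc (by positivity) (fun p => by
    refine le_trans (le_of_eq ?_) (MPS.Mx_row k _ hx hx1 p)
    exact Finset.sum_congr rfl (fun q _ => by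
      rw [Matrix.neg_apply, abs_neg, abs_of_nonneg (MPS.Mx_nonneg k _ hx p q)]))).1
  have hinv : (((n : ℝ) ^ k) • (1 - (-(MPS.Mx k (n : ℝ)⁻¹))))⁻¹
      = ((n : ℝ) ^ k)⁻¹ • (1 - (-(MPS.Mx k (n : ℝ)⁻¹)))⁻¹ := by
    apply Matrix.inv_eq_left_inv
    rw [Matrix.smul_mul, Matrix.mul_smul, hL, smul_smul, inv_mul_cancel₀ hnk, one_smul]
  rw [hinv]
  simp only [Matrix.smul_apply, smul_eq_mul, ← Finset.mul_sum]
  rw [← mul_assoc, mul_inv_cancel₀ hnk, one_mul]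
end

section
/- For k ≥ 1 let N_k be the number of ordered pairs (p,q) ∈ D(k) × D(k) with d(p,q) = 1, and set N_0 = 0. Then for every real number z with |z| < 1/2: ∑_{k=0}^∞ N_k · z^{2k} = 32z⁴ / ((1 + √(1 − 4z²))⁴ · √(1 − 4z²)). -/
open scoped BigOperators

/-- N_k : the number of ordered pairs (p,q) of diagrams in D(k) at loop distance 1
(note that N_0 = 0, since loopDist is identically 0 on D(0)). -/
noncomputable def Ncount (k : ℕ) : ℕ :=
  Nat.card {pq : NCPair k × NCPair k // loopDist pq.1 pq.2 = 1}

/-- real Catalan series -/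
noncomputable def catS : PowerSeries ℝ := PowerSeries.mk fun n => (catalan n : ℝ)
/-- central binomial series -/
noncomputable def cenS : PowerSeries ℝ := PowerSeries.mk fun n => (n.centralBinom : ℝ)

lemma catS_eq : catS = 1 + PowerSeries.X * catS ^ 2 := by
  ext n
  cases n with
  | zero => simp [catS]
  | succ n =>
    rw [map_add, mul_comm, PowerSeries.coeff_succ_mul_X, sq, PowerSeries.coeff_mul]
    simp [catS, catalan_succ', PowerSeries.coeff_one]

lemma cenS_eq : cenS * (1 - 2 * PowerSeries.X * catS) = 1 := by
  have h1 : cenS = PowerSeries.derivative ℝ (PowerSeries.X * catS) := by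
    ext n
    rw [PowerSeries.coeff_derivative, mul_comm PowerSeries.X,
      PowerSeries.coeff_succ_mul_X]
    simp only [cenS, catS, PowerSeries.coeff_mk]
    rw [← succ_mul_catalan_eq_centralBinom]; push_cast; ring
  set Y := PowerSeries.X * catS with hY
  have h2 : Y ^ 2 - Y + PowerSeries.X = 0 := by
    have := catS_eq
    rw [hY]
    linear_combination (-PowerSeries.X) * this
  have h3 := congrArg (PowerSeries.derivative ℝ) h2
  rw [h1]
  simp [Derivation.leibniz_pow] at h3
  linear_combination (-1) * h3

/-- abs. convergent evaluation -/
def HS (x : ℝ) (φ : PowerSeries ℝ) (v : ℝ) : Prop :=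
  Summable (fun n => ‖PowerSeries.coeff n φ * x ^ n‖) ∧
    HasSum (fun n => PowerSeries.coeff n φ * x ^ n) v

lemma HS.mul {x : ℝ} {φ ψ : PowerSeries ℝ} {v w : ℝ} (h : HS x φ v) (h' : HS x ψ w) :
    HS x (φ * ψ) (v * w) := by
  have key : ∀ n, PowerSeries.coeff n (φ * ψ) * x ^ n =
      ∑ kl ∈ Finset.HasAntidiagonal.antidiagonal n, (PowerSeries.coeff kl.1 φ * x ^ kl.1) *
        (PowerSeries.coeff kl.2 ψ * x ^ kl.2) := by
    intro n
    rw [PowerSeries.coeff_mul, Finset.sum_mul]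
    refine Finset.sum_congr rfl fun kl hkl => ?_
    rw [← Finset.HasAntidiagonal.mem_antidiagonal.1 hkl, pow_add]; ring
  have hs := summable_norm_sum_mul_antidiagonal_of_summable_norm h.1 h'.1
  refine ⟨by simpa only [key] using hs, ?_⟩
  simp only [key]
  rw [← h.2.tsum_eq, ← h'.2.tsum_eq,
    tsum_mul_tsum_eq_tsum_sum_antidiagonal_of_summable_norm h.1 h'.1]
  exact hs.of_norm.hasSum

lemma HS.sub {x : ℝ} {φ ψ : PowerSeries ℝ} {v w : ℝ} (h : HS x φ v) (h' : HS x ψ w) :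
    HS x (φ - ψ) (v - w) := by
  constructor
  · refine Summable.of_nonneg_of_le (fun _ => norm_nonneg _) (fun n => ?_) (h.1.add h'.1)
    rw [map_sub, sub_mul]; exact norm_sub_le _ _
  · simpa [sub_mul] using h.2.sub h'.2

lemma HS.C (x a : ℝ) : HS x (PowerSeries.C a) a := by
  have : ∀ n, n ≠ 0 → PowerSeries.coeff n (PowerSeries.C a) * x ^ n = 0 := by
    intro n hn; simp [PowerSeries.coeff_C, hn]
  constructor
  · exact summable_of_ne_finset_zero (s := {0}) (fun n hn => by rw [this n (by simpa using hn)]; simp)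
  · simpa using hasSum_single 0 this

lemma HS.one (x : ℝ) : HS x 1 1 := by simpa using HS.C x 1
lemma HS.two (x : ℝ) : HS x 2 2 := by
  have := HS.C x 2
  rwa [map_ofNat] at this

lemma HS.X (x : ℝ) : HS x PowerSeries.X x := by
  have : ∀ n, n ≠ 1 → PowerSeries.coeff n (PowerSeries.X : PowerSeries ℝ) * x ^ n = 0 := by
    intro n hn; simp [PowerSeries.coeff_X, hn]
  constructor
  · exact summable_of_ne_finset_zero (s := {1}) (fun n hn => by rw [this n (by simpa using hn)]; simp)
  · simpa using hasSum_single 1 this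

lemma HS.unique {x : ℝ} {φ : PowerSeries ℝ} {v w : ℝ} (h : HS x φ v) (h' : HS x φ w) : v = w :=
  h.2.unique h'.2

lemma HS_of_bound {x : ℝ} (hx : |x| < 1 / 4) (φ : PowerSeries ℝ)
    (h : ∀ n, |PowerSeries.coeff n φ| ≤ 4 ^ n) : ∃ v, HS x φ v := by
  have : Summable (fun n => ‖PowerSeries.coeff n φ * x ^ n‖) := by
    refine Summable.of_nonneg_of_le (fun _ => norm_nonneg _) (fun n => ?_)
      (summable_geometric_of_lt_one (r := 4 * |x|) (by positivity) (by linarith))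
    rw [norm_mul, norm_pow, mul_pow, Real.norm_eq_abs, Real.norm_eq_abs]
    exact mul_le_mul_of_nonneg_right (h n) (by positivity)
  exact ⟨_, this, this.of_norm.hasSum⟩

/-- the series of neighbor counts -/
noncomputable def nbS : PowerSeries ℝ := 2 * (catS - 1) ^ 2 * cenS

lemma nbS_eq : nbS = 2 * PowerSeries.X * catS * nbS + 2 * (catS - 1) ^ 2 := by
  have := cenS_eq
  rw [nbS]
  linear_combination (2 * (catS - 1) ^ 2) * this

lemma nbS_sum (z : ℝ) (hz : |z| < 1 / 2) :
    HasSum (fun k : ℕ => PowerSeries.coeff k nbS * z ^ (2 * k))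
      (32 * z ^ 4 /
        ((1 + Real.sqrt (1 - 4 * z ^ 2)) ^ 4 * Real.sqrt (1 - 4 * z ^ 2))) := by
  set x := z ^ 2 with hxd
  have hx0 : 0 ≤ x := by positivity
  have hx : x < 1 / 4 := by
    rw [hxd, ← sq_abs]; nlinarith [abs_nonneg z]
  have hx' : |x| < 1 / 4 := by rwa [abs_of_nonneg hx0]
  obtain ⟨b, hb⟩ := HS_of_bound hx' cenS (fun n => by
    simp only [cenS, PowerSeries.coeff_mk, Nat.abs_cast]
    exact_mod_cast Nat.centralBinom_le_four_pow n)
  obtain ⟨c, hc⟩ := HS_of_bound hx' catS (fun n => by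
    simp only [catS, PowerSeries.coeff_mk, Nat.abs_cast]
    have h1 := Nat.centralBinom_le_four_pow n
    rw [← succ_mul_catalan_eq_centralBinom] at h1
    have : catalan n ≤ 4 ^ n := by nlinarith
    exact_mod_cast this)
  have hb0 : 0 ≤ b := hb.2.nonneg (fun n => by
    simp only [cenS, PowerSeries.coeff_mk]; positivity)
  have e1 : b * (1 - 2 * x * c) = 1 := by
    have := hb.mul ((HS.one x).sub (((HS.two x).mul (HS.X x)).mul hc))
    rw [cenS_eq] at this
    exact this.unique (HS.one x)
  have e2 : c - x * (c * c) = 1 := by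
    have := hc.sub ((HS.X x).mul (hc.mul hc))
    have h : catS - PowerSeries.X * (catS * catS) = 1 := by linear_combination catS_eq
    rw [h] at this
    exact this.unique (HS.one x)
  set s := 1 - 2 * x * c with hs
  have hs0 : 0 ≤ s := by
    by_contra hneg
    push Not at hneg
    nlinarith
  have hsq : s ^ 2 = 1 - 4 * x := by rw [hs]; linear_combination (-4 * x) * e2
  have hsqrt : Real.sqrt (1 - 4 * x) = s := by
    rw [← hsq]; exact Real.sqrt_sq hs0
  have hspos : 0 < s := lt_of_le_of_ne hs0 (fun h => by rw [← h] at e1; simp at e1)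
  have hcs : c * (1 + s) = 2 := by rw [hs]; linear_combination 2 * e2
  have hn := ((HS.two x).mul ((hc.sub (HS.one x)).mul (hc.sub (HS.one x)))).mul hb
  have hn2 : 2 * ((catS - 1) * (catS - 1)) * cenS = nbS := by rw [nbS, sq]
  rw [hn2] at hn
  rw [hsqrt]
  have hfin : 32 * z ^ 4 / ((1 + s) ^ 4 * s) = 2 * ((c - 1) * (c - 1)) * b := by
    have hc' : c = 2 / (1 + s) := by field_simp; linarith
    have hb' : b = 1 / s := by field_simp; linarith
    have hc1 : c - 1 = x * (c * c) := by linarith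
    rw [hc1, hc', hb', hxd]
    field_simp
    ring
  rw [hfin]
  simpa only [pow_mul, ← hxd] using hn.2

/-- non-crossing pairings of the interval [a,b) as functions on ℕ -/
structure IsNC (a b : ℕ) (f : ℕ → ℕ) : Prop where
  out : ∀ x, (x < a ∨ b ≤ x) → f x = x
  ge : ∀ x, a ≤ x → x < b → a ≤ f x
  lt : ∀ x, a ≤ x → x < b → f x < b
  ne : ∀ x, a ≤ x → x < b → f x ≠ x
  inv : ∀ x, f (f x) = x
  nc : ∀ x y, x < y → y < f x → f y < f x

lemma IsNC.nc' {a b : ℕ} {f : ℕ → ℕ} (h : IsNC a b f) (x y : ℕ) (h1 : x < y) (h2 : y < f x) :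
    x < f y := by
  by_contra hc
  have h3 := h.inv x
  have h4 := h.inv y
  rcases lt_or_eq_of_le (not_lt.1 hc) with h5 | h5
  · have := h.nc (f y) x h5 (by omega)
    omega
  · rw [← h5] at h2; omega

/-- restriction -/
def res (u v : ℕ) (f : ℕ → ℕ) (x : ℕ) : ℕ := if u ≤ x ∧ x < v then f x else x

lemma res_isNC {a b u v : ℕ} {f : ℕ → ℕ} (h : IsNC a b f) (hu : a ≤ u) (hv : v ≤ b)
    (hp : ∀ x, u ≤ x → x < v → u ≤ f x ∧ f x < v) : IsNC u v (res u v f) := by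
  constructor
  · intro x hx; unfold res; grind
  · intro x hx; unfold res; grind
  · intro x hx; unfold res; grind
  · intro x hx; unfold res; have := h.ne x; grind
  · intro x; unfold res; have := h.inv x; grind
  · intro x y; unfold res; have := h.nc x y; grind

/-- glue -/
def glue (a c : ℕ) (f g : ℕ → ℕ) (x : ℕ) : ℕ :=
  if x = a then c else if x = c then a else if x < c then f x else g x

lemma IsNC.pt {a b : ℕ} {f : ℕ → ℕ} (h : IsNC a b f) (x : ℕ) :
    ((x < a ∨ b ≤ x) ∧ f x = x) ∨ (a ≤ x ∧ x < b ∧ a ≤ f x ∧ f x < b ∧ f x ≠ x) := by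
  by_cases hx : x < a ∨ b ≤ x
  · exact Or.inl ⟨hx, h.out x hx⟩
  · push Not at hx
    exact Or.inr ⟨hx.1, hx.2, h.ge x hx.1 hx.2, h.lt x hx.1 hx.2, h.ne x hx.1 hx.2⟩

lemma IsNC.inj {a b : ℕ} {f : ℕ → ℕ} (h : IsNC a b f) {x y : ℕ} (e : f x = f y) : x = y := by
  rw [← h.inv x, e, h.inv]

lemma glue_isNC {a c b : ℕ} {f g : ℕ → ℕ} (hac : a < c) (hcb : c < b)
    (hf : IsNC (a + 1) c f) (hg : IsNC (c + 1) b g) : IsNC a b (glue a c f g) := by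
  constructor
  · intro x hx; unfold glue; have := hf.pt x; have := hg.pt x; split_ifs <;> omega
  · intro x hx hx'; unfold glue; have := hf.pt x; have := hg.pt x; split_ifs <;> omega
  · intro x hx hx'; unfold glue; have := hf.pt x; have := hg.pt x; split_ifs <;> omega
  · intro x hx hx'; unfold glue; have := hf.pt x; have := hg.pt x; split_ifs <;> omega
  · intro x; unfold glue; have := hf.pt x; have := hg.pt x
    have := hf.inv x; have := hg.inv x; split_ifs <;> omega
  · intro x y; unfold glue
    have := hf.pt x; have := hg.pt x
    have := hf.pt y; have := hg.pt y
    have := hf.nc x y; have := hg.nc x y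
    split_ifs <;> omega

/-- concatenation -/
def cat (c : ℕ) (f g : ℕ → ℕ) (x : ℕ) : ℕ := if x < c then f x else g x

lemma cat_isNC {a c b : ℕ} {f g : ℕ → ℕ} (hac : a ≤ c) (hcb : c ≤ b)
    (hf : IsNC a c f) (hg : IsNC c b g) : IsNC a b (cat c f g) := by
  constructor
  · intro x hx; unfold cat; have := hf.pt x; have := hg.pt x; split_ifs <;> omega
  · intro x hx hx'; unfold cat; have := hf.pt x; have := hg.pt x; split_ifs <;> omega
  · intro x hx hx'; unfold cat; have := hf.pt x; have := hg.pt x; split_ifs <;> omega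
  · intro x hx hx'; unfold cat; have := hf.pt x; have := hg.pt x; split_ifs <;> omega
  · intro x; unfold cat; have := hf.pt x; have := hg.pt x
    have := hf.inv x; have := hg.inv x; split_ifs <;> omega
  · intro x y; unfold cat
    have := hf.pt x; have := hg.pt x
    have := hf.pt y; have := hg.pt y
    have := hf.nc x y; have := hg.nc x y
    split_ifs <;> omega

/-- rewired concatenation -/
def rew (a c : ℕ) (f g : ℕ → ℕ) (x : ℕ) : ℕ :=
  if x = a then g c else if x = g c then a else if x = c then f a else if x = f a then c else
    if x < c then f x else g x

lemma rew_cases {a c b : ℕ} {f g : ℕ → ℕ} (hac : a < c) (hcb : c < b)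
    (hf : IsNC a c f) (hg : IsNC c b g) :
    (a < f a ∧ f a < c ∧ c < g c ∧ g c < b) ∧
    ∀ x, (x = a ∧ rew a c f g x = g c) ∨ (x = g c ∧ rew a c f g x = a) ∨
      (x = c ∧ rew a c f g x = f a) ∨ (x = f a ∧ rew a c f g x = c) ∨
      ((x < a ∨ b ≤ x) ∧ rew a c f g x = x) ∨
      (a < x ∧ x < f a ∧ rew a c f g x = f x ∧ a < f x ∧ f x < f a ∧ f x ≠ x) ∨
      (f a < x ∧ x < c ∧ rew a c f g x = f x ∧ f a < f x ∧ f x < c ∧ f x ≠ x) ∨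
      (c < x ∧ x < g c ∧ rew a c f g x = g x ∧ c < g x ∧ g x < g c ∧ g x ≠ x) ∨
      (g c < x ∧ x < b ∧ rew a c f g x = g x ∧ g c < g x ∧ g x < b ∧ g x ≠ x) := by
  have h0 : a < f a ∧ f a < c ∧ c < g c ∧ g c < b := by
    have ha := hf.pt a
    have hc := hg.pt c
    omega
  refine ⟨h0, fun x => ?_⟩
  have kf1 : f x = a → x = f a := fun h => hf.inj (by rw [h, hf.inv])
  have kf2 : f x = f a → x = a := fun h => hf.inj h
  have kg1 : g x = c → x = g c := fun h => hg.inj (by rw [h, hg.inv])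
  have kg2 : g x = g c → x = c := fun h => hg.inj h
  have pf := hf.pt x
  have pg := hg.pt x
  have nf := hf.nc a (f x)
  have ng := hg.nc c (g x)
  rw [hf.inv] at nf
  rw [hg.inv] at ng
  have nf' := hf.nc a x
  have ng' := hg.nc c x
  unfold rew
  by_cases h1 : x = a
  · simp [h1]
  by_cases h2 : x = g c
  · simp [h2]
  by_cases h3 : x = c
  · subst h3; simp [h1, h2]
  by_cases h4 : x = f a
  · rw [if_neg h1, if_neg h2, if_neg h3, if_pos h4]; simp [h4]
  rw [if_neg h1, if_neg h2, if_neg h3, if_neg h4]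
  by_cases h5 : x < c
  · rw [if_pos h5]
    clear pg ng ng' kg1 kg2
    iterate 4 apply Or.inr
    by_cases h6 : x < a
    · left; omega
    right
    by_cases h7 : x < f a
    · left; omega
    · right; left; omega
  · rw [if_neg h5]
    clear pf nf nf' kf1 kf2
    iterate 4 apply Or.inr
    by_cases h6 : b ≤ x
    · left; omega
    iterate 3 apply Or.inr
    by_cases h7 : x < g c
    · left; omega
    · right; omega

lemma rew_isNC {a c b : ℕ} {f g : ℕ → ℕ} (hac : a < c) (hcb : c < b)
    (hf : IsNC a c f) (hg : IsNC c b g) : IsNC a b (rew a c f g) := by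
  obtain ⟨h0, e⟩ := rew_cases hac hcb hf hg
  constructor
  · intro x hx; have := e x; omega
  · intro x hx hx'; have := e x; omega
  · intro x hx hx'; have := e x; omega
  · intro x hx hx'; have := e x; omega
  · intro x
    have h1 := hf.inv x
    have h2 := hg.inv x
    have h3 := e (rew a c f g x)
    rcases e x with h | h | h | h | h | h | h | h | h
    · omega
    · omega
    · omega
    · omega
    · omega
    · rw [h.2.2.1] at h3 ⊢; omega
    · rw [h.2.2.1] at h3 ⊢; omega
    · rw [h.2.2.1] at h3 ⊢; omega
    · rw [h.2.2.1] at h3 ⊢; omega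
  · intro x y
    have := hf.nc x y; have := hg.nc x y
    rcases e x with h | h | h | h | h | h | h | h | h <;>
    have h' := e y <;> omega

instance NC_finite (a b : ℕ) : Finite {f // IsNC a b f} := by
  refine Finite.of_injective (β := Fin b → Fin b) (fun f x => ⟨f.1 x, ?_⟩) ?_
  · have := f.2.pt x; have := x.2; omega
  · intro f g h
    apply Subtype.ext
    funext x
    by_cases hx : x < b
    · have := congrFun h ⟨x, hx⟩
      simpa using this
    · rw [f.2.out x (by omega), g.2.out x (by omega)]

lemma glue_inj {a c b : ℕ} {f g f' g' : ℕ → ℕ} (hac : a < c)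
    (hf : IsNC (a + 1) c f) (hg : IsNC (c + 1) b g)
    (hf' : IsNC (a + 1) c f') (hg' : IsNC (c + 1) b g')
    (h : glue a c f g = glue a c f' g') : f = f' ∧ g = g' := by
  constructor
  · funext x
    have h1 := congrFun h x
    have := hf.pt x
    have := hf'.pt x
    unfold glue at h1
    split_ifs at h1 <;> omega
  · funext x
    have h1 := congrFun h x
    have := hg.pt x
    have := hg'.pt x
    unfold glue at h1
    split_ifs at h1 <;> omega

lemma glue_left (a c : ℕ) (f g : ℕ → ℕ) : glue a c f g a = c := by simp [glue]

lemma exists_glue {a b : ℕ} {f : ℕ → ℕ} (hab : a < b) (h : IsNC a b f) :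
    a < f a ∧ f a < b ∧ ∃ f1 f2, IsNC (a + 1) (f a) f1 ∧ IsNC (f a + 1) b f2 ∧
      f = glue a (f a) f1 f2 := by
  have h0 := h.pt a
  have hi := h.inv a
  have hL : ∀ x, a < x → x < f a → a < f x ∧ f x < f a := fun x h1 h2 =>
    ⟨h.nc' a x h1 h2, h.nc a x h1 h2⟩
  have hR : ∀ x, f a < x → x < b → f a < f x ∧ f x < b := fun x h1 h2 => by
    have e1 := h.pt x
    have e2 : f x ≠ f a := fun e => by have := h.inj e; omega
    have e3 : f x ≠ a := fun e => by rw [← e, h.inv] at h1; omega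
    have e4 := hL (f x)
    rw [h.inv] at e4
    omega
  refine ⟨by omega, by omega, res (a + 1) (f a) f, res (f a + 1) b f,
    res_isNC h (by omega) (by omega) (fun x h1 h2 => by have := hL x; omega),
    res_isNC h (by omega) (by omega) (fun x h1 h2 => by have := hR x; omega), ?_⟩
  funext x
  have hx := h.pt x
  unfold glue res
  by_cases h1 : x = a
  · simp [h1]
  by_cases h2 : x = f a
  · rw [if_neg h1, if_pos h2, h2, hi]
  rw [if_neg h1, if_neg h2]
  split_ifs <;> omega

lemma card_NC_rec (a m : ℕ) : Nat.card {f // IsNC a (a + (m + 2)) f} =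
    ∑ ij ∈ Finset.HasAntidiagonal.antidiagonal m,
      Nat.card {f // IsNC (a + 1) (a + 1 + ij.1) f} *
      Nat.card {f // IsNC (a + 1 + ij.1 + 1) (a + 1 + ij.1 + 1 + ij.2) f} := by
  rw [← Finset.sum_coe_sort]
  simp_rw [← Nat.card_prod]
  rw [← Nat.card_sigma]
  symm
  refine Nat.card_congr (Equiv.ofBijective (fun s => ⟨glue a (a + 1 + s.1.1.1) s.2.1.1 s.2.2.1, ?_⟩) ⟨?_, ?_⟩)
  · have h1 := s.2.1.2
    have h2 := s.2.2.2
    have h3 := Finset.HasAntidiagonal.mem_antidiagonal.1 s.1.2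
    have e : a + 1 + s.1.1.1 + 1 + s.1.1.2 = a + (m + 2) := by omega
    rw [← e]
    exact glue_isNC (by omega) (by omega) h1 h2
  · rintro ⟨⟨⟨i, j⟩, hij⟩, ⟨f1, hf1⟩, ⟨f2, hf2⟩⟩ ⟨⟨⟨i', j'⟩, hij'⟩, ⟨g1, hg1⟩, ⟨g2, hg2⟩⟩ hh
    have h := congrArg Subtype.val hh
    clear hh
    dsimp only at h hf1 hf2 hg1 hg2
    have h1 := congrFun h a
    rw [glue_left, glue_left] at h1
    have hi : i = i' := by omega
    have hj : j = j' := by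
      have := Finset.HasAntidiagonal.mem_antidiagonal.1 hij
      have := Finset.HasAntidiagonal.mem_antidiagonal.1 hij'
      simp only at *
      omega
    subst hi hj
    obtain ⟨rfl, rfl⟩ := glue_inj (by omega) hf1 hf2 hg1 hg2 h
    rfl
  · rintro ⟨f, hf⟩
    obtain ⟨h1, h2, f1, f2, hf1, hf2, h⟩ := exists_glue (by omega) hf
    obtain ⟨i, hi⟩ : ∃ i, f a = a + 1 + i := ⟨f a - (a + 1), by omega⟩
    obtain ⟨j, hj⟩ : ∃ j, a + (m + 2) = a + 1 + i + 1 + j := ⟨m - i, by omega⟩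
    rw [hi] at h hf1 hf2
    rw [hj] at hf2
    exact ⟨⟨⟨(i, j), Finset.HasAntidiagonal.mem_antidiagonal.2 (by simp only; omega)⟩, ⟨f1, hf1⟩, ⟨f2, hf2⟩⟩,
      Subtype.ext h.symm⟩

lemma card_NC_zero (a : ℕ) : Nat.card {f // IsNC a (a + 0) f} = 1 := by
  rw [Nat.card_eq_one_iff_unique]
  refine ⟨⟨fun f g => Subtype.ext (funext fun x => ?_)⟩, ⟨⟨id, ?_⟩⟩⟩
  · rw [f.2.out x (by omega), g.2.out x (by omega)]
  · constructor
    · intros; rfl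
    · intros; omega
    · intros; omega
    · intros; omega
    · intros; rfl
    · intros; simp at *; omega

lemma card_NC_one (a : ℕ) : Nat.card {f // IsNC a (a + 1) f} = 0 := by
  have : IsEmpty {f // IsNC a (a + 1) f} := ⟨fun f => by
    have := f.2.pt a
    omega⟩
  simp

/-- disagreement set -/
def dis (f g : ℕ → ℕ) : Set ℕ := {x | f x ≠ g x}

lemma dis_subset {a b : ℕ} {f g : ℕ → ℕ} (hf : IsNC a b f) (hg : IsNC a b g) :
    dis f g ⊆ Set.Ico a b := by
  intro x hx
  by_contra hc
  rw [Set.mem_Ico] at hc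
  exact hx (by rw [hf.out x (by omega), hg.out x (by omega)])

lemma dis_fin {a b : ℕ} {f g : ℕ → ℕ} (hf : IsNC a b f) (hg : IsNC a b g) :
    (dis f g).Finite := (Set.finite_Ico a b).subset (dis_subset hf hg)

lemma dis_four {a b : ℕ} {f g : ℕ → ℕ} (hf : IsNC a b f) (hg : IsNC a b g) {x : ℕ}
    (hx : x ∈ dis f g) : ({x, f x, g x, f (g x)} : Set ℕ) ⊆ dis f g ∧
      ({x, f x, g x, f (g x)} : Set ℕ).ncard = 4 := by
  have hI := dis_subset hf hg hx
  rw [Set.mem_Ico] at hI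
  have hx' : f x ≠ g x := hx
  have n1 := hf.ne x hI.1 hI.2
  have n2 := hg.ne x hI.1 hI.2
  have n3 := hf.ne (g x) (hg.ge x hI.1 hI.2) (hg.lt x hI.1 hI.2)
  have n4 : f (g x) ≠ x := fun h => hx' (by rw [← h, hf.inv, h])
  have n5 : f (g x) ≠ f x := fun h => n2 (hf.inj h)
  constructor
  · rintro y (rfl | rfl | rfl | rfl)
    · exact hx
    · intro h
      rw [hf.inv] at h
      exact hx' (by rw [h, hg.inv, ← h])
    · intro h
      rw [hg.inv] at h
      exact n4 h
    · intro h
      rw [hf.inv] at h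
      exact n4 (hg.inj h.symm)
  · have : ({x, f x, g x, f (g x)} : Set ℕ) = (({x, f x, g x, f (g x)} : Finset ℕ) : Set ℕ) := by
      simp
    rw [this, Set.ncard_coe_finset]
    rw [Finset.card_insert_of_notMem, Finset.card_insert_of_notMem, Finset.card_insert_of_notMem,
      Finset.card_singleton]
    · simpa using n3.symm
    · simp only [Finset.mem_insert, Finset.mem_singleton, not_or]
      exact ⟨hx', n5.symm⟩
    · simp only [Finset.mem_insert, Finset.mem_singleton, not_or]
      exact ⟨n1.symm, n2.symm, n4.symm⟩

lemma dis_ge {a b : ℕ} {f g : ℕ → ℕ} (hf : IsNC a b f) (hg : IsNC a b g)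
    (h : f ≠ g) : 4 ≤ (dis f g).ncard := by
  obtain ⟨x, hx⟩ := Function.ne_iff.1 h
  obtain ⟨h1, h2⟩ := dis_four hf hg (x := x) hx
  rw [← h2]
  exact Set.ncard_le_ncard h1 (dis_fin hf hg)

lemma dis_eq_of_card {a b : ℕ} {f g : ℕ → ℕ} (hf : IsNC a b f) (hg : IsNC a b g)
    (h : (dis f g).ncard = 4) {x : ℕ} (hx : x ∈ dis f g) :
    dis f g = {x, f x, g x, f (g x)} := by
  obtain ⟨h1, h2⟩ := dis_four hf hg hx
  exact (Set.eq_of_subset_of_ncard_le h1 (by omega) (dis_fin hf hg)).symm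

lemma dis_self (f : ℕ → ℕ) : (dis f f).ncard = 0 := by simp [dis]

lemma dis_glue {a c b : ℕ} {f g f' g' : ℕ → ℕ} (hac : a < c)
    (hf : IsNC (a + 1) c f) (hg : IsNC (c + 1) b g)
    (hf' : IsNC (a + 1) c f') (hg' : IsNC (c + 1) b g') :
    (dis (glue a c f g) (glue a c f' g')).ncard = (dis f f').ncard + (dis g g').ncard := by
  rw [← Set.ncard_union_eq _ (dis_fin hf hf') (dis_fin hg hg')]
  · congr 1
    ext x
    simp only [dis, Set.mem_ofPred_eq, Set.mem_union]
    have := hf.pt x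
    have := hf'.pt x
    have := hg.pt x
    have := hg'.pt x
    unfold glue
    split_ifs <;> omega
  · refine Set.disjoint_left.2 fun x h1 h2 => ?_
    have h3 := dis_subset hf hf' h1
    have h4 := dis_subset hg hg' h2
    rw [Set.mem_Ico] at h3 h4
    omega

/-- pairs at distance one -/
def PS (a b : ℕ) : Set ((ℕ → ℕ) × (ℕ → ℕ)) :=
  {p | IsNC a b p.1 ∧ IsNC a b p.2 ∧ (dis p.1 p.2).ncard = 4}

lemma PS_finite (a b : ℕ) : (PS a b).Finite := by
  have h : {f | IsNC a b f}.Finite := NC_finite a b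
  exact (h.prod h).subset fun p hp => ⟨hp.1, hp.2.1⟩

instance PS_fin' (a b : ℕ) : Finite (PS a b) := PS_finite a b

/-- pairs with the same partner of `a` -/
def ES (a b : ℕ) : Set ((ℕ → ℕ) × (ℕ → ℕ)) := {p | p ∈ PS a b ∧ p.1 a = p.2 a}

/-- pairs with different partners of `a` -/
def LS (a b : ℕ) : Set ((ℕ → ℕ) × (ℕ → ℕ)) := {p | p ∈ PS a b ∧ p.1 a < p.2 a}

/-- the sum type of the two kinds of pairs with the same partner -/
abbrev ET (a i j : ℕ) : Type :=
  (PS (a + 1) (a + 1 + i) × {f // IsNC (a + 1 + i + 1) (a + 1 + i + 1 + j) f}) ⊕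
  ({f // IsNC (a + 1) (a + 1 + i) f} × PS (a + 1 + i + 1) (a + 1 + i + 1 + j))

/-- gluing pairs -/
def EM (a i j : ℕ) : ET a i j → (ℕ → ℕ) × (ℕ → ℕ)
  | .inl (p, f) => (glue a (a + 1 + i) p.1.1 f.1, glue a (a + 1 + i) p.1.2 f.1)
  | .inr (f, p) => (glue a (a + 1 + i) f.1 p.1.1, glue a (a + 1 + i) f.1 p.1.2)

lemma EM_mem (a i j : ℕ) (s : ET a i j) : EM a i j s ∈ ES a (a + 1 + i + 1 + j) := by
  rcases s with ⟨p, f⟩ | ⟨f, p⟩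
  · obtain ⟨⟨p, q⟩, hp, hq, hd⟩ := p
    obtain ⟨f, hf⟩ := f
    refine ⟨⟨glue_isNC (by omega) (by omega) hp hf, glue_isNC (by omega) (by omega) hq hf, ?_⟩, ?_⟩
    · simp only [EM]
      rw [dis_glue (by omega) hp hf hq hf, dis_self]
      exact hd
    · simp [EM, glue_left]
  · obtain ⟨⟨p, q⟩, hp, hq, hd⟩ := p
    obtain ⟨f, hf⟩ := f
    refine ⟨⟨glue_isNC (by omega) (by omega) hf hp, glue_isNC (by omega) (by omega) hf hq, ?_⟩, ?_⟩
    · simp only [EM]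
      rw [dis_glue (by omega) hf hp hf hq, dis_self, zero_add]
      exact hd
    · simp [EM, glue_left]

lemma PS_ne {p q : ℕ → ℕ} (hd : (dis p q).ncard = 4) : p ≠ q := by
  rintro rfl
  rw [dis_self] at hd
  omega

lemma EM_inj (a i j : ℕ) : Function.Injective (EM a i j) := by
  rintro (⟨⟨⟨p, q⟩, hp, hq, hd⟩, ⟨f, hf⟩⟩ | ⟨⟨f, hf⟩, ⟨⟨p, q⟩, hp, hq, hd⟩⟩)
    (⟨⟨⟨p', q'⟩, hp', hq', hd'⟩, ⟨f', hf'⟩⟩ | ⟨⟨f', hf'⟩, ⟨⟨p', q'⟩, hp', hq', hd'⟩⟩) h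
  · simp only [EM, Prod.mk.injEq] at h
    obtain ⟨rfl, rfl⟩ := glue_inj (by omega) hp hf hp' hf' h.1
    obtain ⟨rfl, -⟩ := glue_inj (by omega) hq hf hq' hf h.2
    rfl
  · simp only [EM, Prod.mk.injEq] at h
    obtain ⟨e1, -⟩ := glue_inj (by omega) hp hf hf' hp' h.1
    obtain ⟨e2, -⟩ := glue_inj (by omega) hq hf hf' hq' h.2
    exact absurd (e1.trans e2.symm) (PS_ne hd)
  · simp only [EM, Prod.mk.injEq] at h
    obtain ⟨e1, -⟩ := glue_inj (by omega) hf hp hp' hf' h.1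
    obtain ⟨e2, -⟩ := glue_inj (by omega) hf hq hq' hf' h.2
    exact absurd (e1.symm.trans e2) (PS_ne hd')
  · simp only [EM, Prod.mk.injEq] at h
    obtain ⟨rfl, rfl⟩ := glue_inj (by omega) hf hp hf' hp' h.1
    obtain ⟨-, rfl⟩ := glue_inj (by omega) hf hq hf hq' h.2
    rfl

lemma EM_left (a i j : ℕ) (s : ET a i j) : (EM a i j s).1 a = a + 1 + i := by
  rcases s with ⟨p, f⟩ | ⟨f, p⟩ <;> simp [EM, glue_left]

lemma EM_surj {a i j : ℕ} {p : (ℕ → ℕ) × (ℕ → ℕ)} (hp : p ∈ ES a (a + 1 + i + 1 + j))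
    (hi : p.1 a = a + 1 + i) : ∃ s, EM a i j s = p := by
  obtain ⟨p, q⟩ := p
  obtain ⟨⟨hp, hq, hd⟩, e⟩ := hp
  simp only at hp hq hd e hi
  obtain ⟨-, -, p1, p2, hp1, hp2, h⟩ := exists_glue (by omega) hp
  obtain ⟨-, -, q1, q2, hq1, hq2, h'⟩ := exists_glue (by omega) hq
  rw [← e] at h' hq1 hq2
  rw [hi] at h h' hp1 hp2 hq1 hq2
  rw [h, h', dis_glue (by omega) hp1 hp2 hq1 hq2] at hd
  by_cases e1 : p1 = q1
  · subst e1
    rw [dis_self, zero_add] at hd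
    exact ⟨.inr (⟨p1, hp1⟩, ⟨(p2, q2), hp2, hq2, hd⟩), by rw [h, h']; rfl⟩
  · have g1 := dis_ge hp1 hq1 e1
    by_cases e2 : p2 = q2
    · subst e2
      rw [dis_self, add_zero] at hd
      exact ⟨.inl (⟨(p1, q1), hp1, hq1, hd⟩, ⟨p2, hp2⟩), by rw [h, h']; rfl⟩
    · have g2 := dis_ge hp2 hq2 e2
      omega

lemma card_ES (a m : ℕ) : Nat.card (ES a (a + (m + 2))) =
    ∑ ij ∈ Finset.HasAntidiagonal.antidiagonal m,
      (Nat.card (PS (a + 1) (a + 1 + ij.1)) *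
        Nat.card {f // IsNC (a + 1 + ij.1 + 1) (a + 1 + ij.1 + 1 + ij.2) f} +
      Nat.card {f // IsNC (a + 1) (a + 1 + ij.1) f} *
        Nat.card (PS (a + 1 + ij.1 + 1) (a + 1 + ij.1 + 1 + ij.2))) := by
  rw [← Finset.sum_coe_sort]
  simp_rw [← Nat.card_prod, ← Nat.card_sum]
  rw [← Nat.card_sigma]
  symm
  refine Nat.card_congr (Equiv.ofBijective (fun s => ⟨EM a s.1.1.1 s.1.1.2 s.2, ?_⟩) ⟨?_, ?_⟩)
  · have h3 := Finset.HasAntidiagonal.mem_antidiagonal.1 s.1.2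
    have e : a + 1 + s.1.1.1 + 1 + s.1.1.2 = a + (m + 2) := by omega
    rw [← e]
    exact EM_mem _ _ _ _
  · rintro ⟨⟨⟨i, j⟩, hij⟩, s⟩ ⟨⟨⟨i', j'⟩, hij'⟩, s'⟩ hh
    have h := congrArg Subtype.val hh
    clear hh
    dsimp only at h
    have h1 : (EM a i j s).1 a = (EM a i' j' s').1 a := by rw [h]
    rw [EM_left, EM_left] at h1
    have hi : i = i' := by omega
    have hj : j = j' := by
      have := Finset.HasAntidiagonal.mem_antidiagonal.1 hij
      have := Finset.HasAntidiagonal.mem_antidiagonal.1 hij'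
      simp only at *
      omega
    subst hi hj
    obtain rfl := EM_inj _ _ _ h
    rfl
  · rintro ⟨p, hp⟩
    have h0 := hp.1.1.pt a
    obtain ⟨i, hi⟩ : ∃ i, p.1 a = a + 1 + i := ⟨p.1 a - (a + 1), by 
      have := exists_glue (by omega) hp.1.1
      omega⟩
    obtain ⟨j, hj⟩ : ∃ j, a + (m + 2) = a + 1 + i + 1 + j := ⟨m - i, by omega⟩
    rw [hj] at hp
    obtain ⟨s, hs⟩ := EM_surj hp hi
    exact ⟨⟨⟨(i, j), Finset.HasAntidiagonal.mem_antidiagonal.2 (by simp only; omega)⟩, s⟩,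
      Subtype.ext hs⟩

lemma cat_rew {a c b : ℕ} {f g : ℕ → ℕ} (hac : a < c) (hcb : c < b)
    (hf : IsNC a c f) (hg : IsNC c b g) :
    (cat c f g, rew a c f g) ∈ LS a b ∧ cat c f g (rew a c f g a) = c := by
  obtain ⟨⟨h1, h2, h3, h4⟩, e⟩ := rew_cases hac hcb hf hg
  have c1 : cat c f g a = f a := by simp [cat, hac]
  have c2 : rew a c f g a = g c := by simp [rew]
  have c3 : cat c f g (rew a c f g a) = c := by
    rw [c2]; unfold cat; rw [if_neg (by omega), hg.inv]
  have hC := cat_isNC hac.le hcb.le hf hg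
  have hR := rew_isNC hac hcb hf hg
  refine ⟨⟨⟨hC, hR, ?_⟩, by simp only; omega⟩, c3⟩
  have hd : a ∈ dis (cat c f g) (rew a c f g) := by
    change cat c f g a ≠ rew a c f g a
    omega
  obtain ⟨s1, s2⟩ := dis_four hC hR hd
  rw [← s2]
  congr 1
  refine Set.Subset.antisymm (fun x hx => ?_) s1
  have hx' : cat c f g x ≠ rew a c f g x := hx
  rw [c3, c1, c2]
  simp only [Set.mem_insert_iff, Set.mem_singleton_iff]
  by_contra hne
  push Not at hne
  apply hx'
  unfold cat rew
  rw [if_neg hne.1, if_neg hne.2.2.1, if_neg hne.2.2.2, if_neg hne.2.1]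

lemma LS_exists {a b : ℕ} {f g : ℕ → ℕ} (h : (f, g) ∈ LS a b) :
    ∃ c f1 f2, a < c ∧ c < b ∧ IsNC a c f1 ∧ IsNC c b f2 ∧ f = cat c f1 f2 ∧ g = rew a c f1 f2 := by
  obtain ⟨⟨hf, hg, hd⟩, hlt⟩ := h
  simp only at hf hg hd hlt
  have hda : a ∈ dis f g := by change f a ≠ g a; omega
  have hI := dis_subset hf hg hda
  rw [Set.mem_Ico] at hI
  have D := dis_eq_of_card hf hg hd hda
  have p1 := hf.pt a
  have p2 := hg.pt a
  obtain ⟨c, hc⟩ : ∃ c, c = f (g a) := ⟨_, rfl⟩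
  have hcd : f c = g a := by rw [hc, hf.inv]
  have p3 := hf.pt (g a)
  have ifa := hf.inv a
  have iga := hg.inv a
  have ca : c ≠ a := fun h => by rw [h] at hcd; omega
  have cb : c ≠ f a := fun h => by rw [h, ifa] at hcd; omega
  -- g (f a) = c
  have hgb : g (f a) = c := by
    have m1 : f a ∈ dis f g := by rw [D]; simp
    have m2 := (dis_four hf hg m1).1
    have m3 : g (f a) ∈ dis f g := m2 (by simp)
    rw [D] at m3
    rcases m3 with m | m | m | m
    · exfalso
      have : f a = g a := by rw [← m, hg.inv, m]
      omega
    · exfalso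
      have := hg.ne (f a) (by omega) (by omega)
      exact this m
    · exfalso
      have := hg.inj m
      omega
    · rw [m, hc]
  have q1 := hg.nc a (f a) (by omega) (by omega)
  have q2 := hg.nc' a (f a) (by omega) (by omega)
  have q3 := hf.nc a c
  have hc1 : f a < c := by omega
  have hc2 : c < g a := by omega
  have pres : ∀ x, a ≤ x → x < c → a ≤ f x ∧ f x < c := by
    intro x h1 h2
    have px := hf.pt x
    refine ⟨by omega, ?_⟩
    by_cases x1 : x = a
    · rw [x1]; exact hc1
    by_cases x2 : x = f a
    · rw [x2, ifa]; omega
    by_cases x3 : x < f a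
    · have := hf.nc a x (by omega) x3
      omega
    · have x4 : x ∉ dis f g := by
        rw [D, ← hc]
        simp only [Set.mem_insert_iff, Set.mem_singleton_iff]
        omega
      have x5 : f x = g x := by by_contra hh; exact x4 hh
      have := hg.nc (f a) x (by omega) (by omega)
      omega
  have presR : ∀ x, c ≤ x → x < b → c ≤ f x ∧ f x < b := by
    intro x h1 h2
    have px := hf.pt x
    refine ⟨?_, by omega⟩
    by_contra hh
    have := (pres (f x) (by omega) (by omega)).2
    rw [hf.inv] at this
    omega
  refine ⟨c, res a c f, res c b f, by omega, by omega,
    res_isNC hf le_rfl (by omega) pres, res_isNC hf (by omega) le_rfl presR, ?_, ?_⟩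
  · funext x
    have px := hf.pt x
    unfold cat res
    split_ifs <;> omega
  · funext x
    have px := hf.pt x
    have r1 : res a c f a = f a := by unfold res; rw [if_pos (by omega)]
    have r2 : res c b f c = g a := by unfold res; rw [if_pos (by omega), hcd]
    unfold rew
    rw [r1, r2]
    by_cases x1 : x = a
    · rw [if_pos x1, x1]
    rw [if_neg x1]
    by_cases x2 : x = g a
    · rw [if_pos x2, x2, iga]
    rw [if_neg x2]
    by_cases x3 : x = c
    · rw [if_pos x3, x3, ← hgb, hg.inv]
    rw [if_neg x3]
    by_cases x4 : x = f a
    · rw [if_pos x4, x4, hgb]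
    rw [if_neg x4]
    have x5 : x ∉ dis f g := by
      rw [D, ← hc]
      simp only [Set.mem_insert_iff, Set.mem_singleton_iff]
      omega
    have x6 : f x = g x := by by_contra hh; exact x5 hh
    rw [← x6]
    unfold res
    split_ifs <;> omega

lemma cat_inj {a c b : ℕ} {f g f' g' : ℕ → ℕ}
    (hf : IsNC a c f) (hg : IsNC c b g)
    (hf' : IsNC a c f') (hg' : IsNC c b g')
    (h : cat c f g = cat c f' g') : f = f' ∧ g = g' := by
  constructor
  · funext x
    have h1 := congrFun h x
    have := hf.pt x
    have := hf'.pt x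
    unfold cat at h1
    split_ifs at h1 <;> omega
  · funext x
    have h1 := congrFun h x
    have := hg.pt x
    have := hg'.pt x
    unfold cat at h1
    split_ifs at h1 <;> omega

lemma card_LS (a m : ℕ) : Nat.card (LS a (a + (m + 2))) =
    ∑ ij ∈ Finset.HasAntidiagonal.antidiagonal m,
      Nat.card {f // IsNC a (a + (ij.1 + 1)) f} *
      Nat.card {f // IsNC (a + (ij.1 + 1)) (a + (ij.1 + 1) + (ij.2 + 1)) f} := by
  rw [← Finset.sum_coe_sort]
  simp_rw [← Nat.card_prod]
  rw [← Nat.card_sigma]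
  symm
  refine Nat.card_congr (Equiv.ofBijective (fun s => ⟨(cat (a + (s.1.1.1 + 1)) s.2.1.1 s.2.2.1,
    rew a (a + (s.1.1.1 + 1)) s.2.1.1 s.2.2.1), ?_⟩) ⟨?_, ?_⟩)
  · have h1 := s.2.1.2
    have h2 := s.2.2.2
    have h3 := Finset.HasAntidiagonal.mem_antidiagonal.1 s.1.2
    have e : a + (s.1.1.1 + 1) + (s.1.1.2 + 1) = a + (m + 2) := by omega
    rw [← e]
    exact (cat_rew (by omega) (by omega) h1 h2).1
  · rintro ⟨⟨⟨i, j⟩, hij⟩, ⟨f1, hf1⟩, ⟨f2, hf2⟩⟩ ⟨⟨⟨i', j'⟩, hij'⟩, ⟨g1, hg1⟩, ⟨g2, hg2⟩⟩ hh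
    have h := congrArg Subtype.val hh
    clear hh
    dsimp only at h hf1 hf2 hg1 hg2
    rw [Prod.mk.injEq] at h
    have h1 := (cat_rew (by omega) (by omega) hf1 hf2).2
    have h2 := (cat_rew (by omega) (by omega) hg1 hg2).2
    rw [h.1, h.2, h2] at h1
    have hi : i = i' := by omega
    have hj : j = j' := by
      have := Finset.HasAntidiagonal.mem_antidiagonal.1 hij
      have := Finset.HasAntidiagonal.mem_antidiagonal.1 hij'
      simp only at *
      omega
    subst hi hj
    obtain ⟨rfl, rfl⟩ := cat_inj hf1 hf2 hg1 hg2 h.1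
    rfl
  · rintro ⟨⟨f, g⟩, hf⟩
    obtain ⟨c, f1, f2, h1, h2, hf1, hf2, h, h'⟩ := LS_exists hf
    obtain ⟨i, hi⟩ : ∃ i, c = a + (i + 1) := ⟨c - (a + 1), by omega⟩
    obtain ⟨j, hj⟩ : ∃ j, a + (m + 2) = a + (i + 1) + (j + 1) := ⟨m - i, by omega⟩
    subst hi
    rw [hj] at hf2
    exact ⟨⟨⟨(i, j), Finset.HasAntidiagonal.mem_antidiagonal.2 (by simp only; omega)⟩, ⟨f1, hf1⟩, ⟨f2, hf2⟩⟩,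
      Subtype.ext (Prod.ext h.symm h'.symm)⟩

lemma dis_comm (f g : ℕ → ℕ) : dis f g = dis g f := by
  ext x; exact ne_comm

lemma card_PS_rec (a b : ℕ) : Nat.card (PS a b) = Nat.card (ES a b) + 2 * Nat.card (LS a b) := by
  have hE : (ES a b).Finite := (PS_finite a b).subset fun p hp => hp.1
  have hL : (LS a b).Finite := (PS_finite a b).subset fun p hp => hp.1
  have hR : (Prod.swap '' LS a b).Finite := hL.image _
  have hU : PS a b = ES a b ∪ (LS a b ∪ Prod.swap '' LS a b) := by
    apply Set.Subset.antisymm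
    · intro p hp
      rcases lt_trichotomy (p.1 a) (p.2 a) with h | h | h
      · exact Or.inr (Or.inl ⟨hp, h⟩)
      · exact Or.inl ⟨hp, h⟩
      · refine Or.inr (Or.inr ⟨p.swap, ⟨⟨hp.2.1, hp.1, ?_⟩, h⟩, by simp⟩)
        rw [dis_comm]
        exact hp.2.2
    · rintro p (hp | hp | ⟨p, hp, rfl⟩)
      · exact hp.1
      · exact hp.1
      · refine ⟨hp.1.2.1, hp.1.1, ?_⟩
        rw [dis_comm]
        exact hp.1.2.2
  have d1 : Disjoint (LS a b) (Prod.swap '' LS a b) := by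
    refine Set.disjoint_left.2 ?_
    rintro _ h1 ⟨p, hp, rfl⟩
    have h1 := h1.2
    have h2 := hp.2
    simp at h1
    omega
  have d2 : Disjoint (ES a b) (LS a b ∪ Prod.swap '' LS a b) := by
    refine Set.disjoint_left.2 ?_
    rintro _ h1 (hp | ⟨p, hp, rfl⟩)
    · have h1 := h1.2
      have h2 := hp.2
      omega
    · have h1 := h1.2
      have h2 := hp.2
      simp at h1
      omega
  have := congrArg Set.ncard hU
  rw [Set.ncard_union_eq d2 hE (hL.union hR), Set.ncard_union_eq d1 hL hR,
    Set.ncard_image_of_injective _ Prod.swap_injective] at this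
  simp only [← Nat.card_coe_set_eq] at this
  omega

lemma card_PS_small (a m : ℕ) (hm : m < 4) : Nat.card (PS a (a + m)) = 0 := by
  have : PS a (a + m) = ∅ := by
    refine Set.eq_empty_of_forall_notMem fun p hp => ?_
    have h1 := Set.ncard_le_ncard (dis_subset hp.1 hp.2.1) (Set.finite_Ico _ _)
    rw [hp.2.2] at h1
    have h2 : (Set.Ico a (a + m)).ncard = m := by
      rw [← Finset.coe_Ico, Set.ncard_coe_finset]; simp
    omega
  rw [this]; simp

lemma expand_coeffs (φ : PowerSeries ℝ) (k : ℕ) :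
    PowerSeries.coeff (2 * k) (PowerSeries.expand 2 two_ne_zero φ) = PowerSeries.coeff k φ :=
  PowerSeries.coeff_expand_mul 2 two_ne_zero φ k

/-- Catalan series in `X ^ 2` -/
noncomputable def catE : PowerSeries ℝ := PowerSeries.expand 2 two_ne_zero catS
/-- neighbor series in `X ^ 2` -/
noncomputable def nbE : PowerSeries ℝ := PowerSeries.expand 2 two_ne_zero nbS

lemma catE_eq : catE = 1 + catE * catE * PowerSeries.X ^ 2 := by
  have := congrArg (PowerSeries.expand 2 two_ne_zero) catS_eq
  rw [map_add, map_one, map_mul, map_pow, PowerSeries.expand_X] at this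
  change catE = 1 + PowerSeries.X ^ 2 * catE ^ 2 at this
  linear_combination this

lemma nbE_eq : nbE = (nbE * catE + catE * nbE) * PowerSeries.X ^ 2 +
    2 * ((catE - 1) * (catE - 1)) := by
  have := congrArg (PowerSeries.expand 2 two_ne_zero) nbS_eq
  simp only [map_add, map_one, map_mul, map_pow, PowerSeries.expand_X, map_sub, map_ofNat] at this
  change nbE = 2 * PowerSeries.X ^ 2 * catE * nbE + 2 * (catE - 1) ^ 2 at this
  linear_combination this

lemma catE_zero : PowerSeries.coeff 0 catE = 1 := by
  have := expand_coeffs catS 0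
  rw [mul_zero] at this
  change PowerSeries.coeff 0 catE = _ at this
  rw [this]; simp [catS]

lemma catE_rec (m : ℕ) : PowerSeries.coeff (m + 2) catE =
    ∑ ij ∈ Finset.HasAntidiagonal.antidiagonal m,
      PowerSeries.coeff ij.1 catE * PowerSeries.coeff ij.2 catE := by
  rw [← PowerSeries.coeff_mul]
  conv_lhs => rw [catE_eq]
  rw [map_add, PowerSeries.coeff_mul_X_pow, PowerSeries.coeff_one]
  simp

lemma catE_one : PowerSeries.coeff 1 catE = 0 := by
  conv_lhs => rw [catE_eq]
  rw [map_add, PowerSeries.coeff_mul_X_pow', PowerSeries.coeff_one]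
  simp

lemma catE_sub : catE - 1 =
    PowerSeries.mk (fun n => PowerSeries.coeff (n + 1) catE) * PowerSeries.X := by
  ext n
  cases n with
  | zero => rw [map_sub, catE_zero]; simp
  | succ n => rw [PowerSeries.coeff_succ_mul_X]; simp [PowerSeries.coeff_one]

lemma catE_sub_sq : (catE - 1) * (catE - 1) =
    (PowerSeries.mk (fun n => PowerSeries.coeff (n + 1) catE) *
     PowerSeries.mk (fun n => PowerSeries.coeff (n + 1) catE)) * PowerSeries.X ^ 2 := by
  rw [catE_sub]; ring

lemma nbE_rec (m : ℕ) : PowerSeries.coeff (m + 2) nbE =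
    (∑ ij ∈ Finset.HasAntidiagonal.antidiagonal m,
      (PowerSeries.coeff ij.1 nbE * PowerSeries.coeff ij.2 catE +
       PowerSeries.coeff ij.1 catE * PowerSeries.coeff ij.2 nbE)) +
    2 * ∑ ij ∈ Finset.HasAntidiagonal.antidiagonal m,
      PowerSeries.coeff (ij.1 + 1) catE * PowerSeries.coeff (ij.2 + 1) catE := by
  conv_lhs => rw [nbE_eq, catE_sub_sq, ← mul_assoc, ← add_mul]
  rw [PowerSeries.coeff_mul_X_pow, map_add, map_add, PowerSeries.coeff_mul, PowerSeries.coeff_mul,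
    Finset.sum_add_distrib]
  congr 1
  have : (2 : PowerSeries ℝ) = PowerSeries.C 2 := by rw [map_ofNat]
  rw [this, PowerSeries.coeff_C_mul, PowerSeries.coeff_mul]
  simp

lemma nbE_small (m : ℕ) (hm : m < 2) : PowerSeries.coeff m nbE = 0 := by
  rw [nbE_eq, catE_sub_sq, ← mul_assoc, ← add_mul, PowerSeries.coeff_mul_X_pow', if_neg (by omega)]

lemma card_NC (m : ℕ) : ∀ a, (Nat.card {f // IsNC a (a + m) f} : ℝ) =
    PowerSeries.coeff m catE := by
  induction m using Nat.strong_induction_on with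
  | _ m ih =>
    intro a
    match m, ih with
    | 0, _ => rw [card_NC_zero, catE_zero]; simp
    | 1, _ => rw [card_NC_one, catE_one]; simp
    | m + 2, ih =>
      rw [card_NC_rec, catE_rec]
      push_cast
      refine Finset.sum_congr rfl fun ij hij => ?_
      have := Finset.HasAntidiagonal.mem_antidiagonal.1 hij
      rw [ih ij.1 (by omega), ih ij.2 (by omega)]

lemma card_PS (m : ℕ) : ∀ a, (Nat.card (PS a (a + m)) : ℝ) =
    PowerSeries.coeff m nbE := by
  induction m using Nat.strong_induction_on with
  | _ m ih =>
    intro a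
    match m, ih with
    | 0, _ => rw [card_PS_small _ _ (by omega), nbE_small _ (by omega)]; simp
    | 1, _ => rw [card_PS_small _ _ (by omega), nbE_small _ (by omega)]; simp
    | m + 2, ih =>
      rw [card_PS_rec, card_ES, card_LS, nbE_rec]
      push_cast
      congr 1
      · refine Finset.sum_congr rfl fun ij hij => ?_
        have := Finset.HasAntidiagonal.mem_antidiagonal.1 hij
        rw [ih ij.1 (by omega), ih ij.2 (by omega), card_NC, card_NC]
      · congr 1
        refine Finset.sum_congr rfl fun ij hij => ?_
        rw [card_NC, card_NC]

section orb
variable {α : Type} [Fintype α] {p q : Equiv.Perm α}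

lemma orb_inv (hp : ∀ x, p (p x) = x) (hq : ∀ x, q (q x) = x) (S : Set α)
    (hS : ∀ x ∈ S, p x ∈ S ∧ q x ∈ S) (x : α) (hx : x ∈ S) :
    MulAction.orbit (Subgroup.closure ({p, q} : Set (Equiv.Perm α))) x ⊆ S := by
  have key : ∀ g ∈ Subgroup.closure ({p, q} : Set (Equiv.Perm α)), ∀ y, y ∈ S ↔ g y ∈ S := by
    intro g hg
    induction hg using Subgroup.closure_induction with
    | mem g hg =>
      intro y
      rcases hg with rfl | rfl
      · exact ⟨fun h => (hS y h).1, fun h => by have := (hS _ h).1; rwa [hp] at this⟩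
      · exact ⟨fun h => (hS y h).2, fun h => by have := (hS _ h).2; rwa [hq] at this⟩
    | one => intro y; rfl
    | mul g h _ _ ih1 ih2 => intro y; rw [ih2, ih1]; rfl
    | inv g _ ih => intro y; rw [ih (g⁻¹ y)]; simp
  rintro _ ⟨⟨g, hg⟩, rfl⟩
  exact (key g hg x).1 hx

lemma orb_p (x : α) : p x ∈ MulAction.orbit (Subgroup.closure ({p, q} : Set (Equiv.Perm α))) x :=
  ⟨⟨p, Subgroup.subset_closure (by simp)⟩, rfl⟩

lemma orb_q (x : α) : q x ∈ MulAction.orbit (Subgroup.closure ({p, q} : Set (Equiv.Perm α))) x :=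
  ⟨⟨q, Subgroup.subset_closure (by simp)⟩, rfl⟩

lemma orb_pq (x : α) :
    p (q x) ∈ MulAction.orbit (Subgroup.closure ({p, q} : Set (Equiv.Perm α))) x :=
  ⟨⟨p * q, mul_mem (Subgroup.subset_closure (by simp)) (Subgroup.subset_closure (by simp))⟩, rfl⟩

lemma perm_four (hp : ∀ x, p (p x) = x) (hq : ∀ x, q (q x) = x)
    (hp' : ∀ x, p x ≠ x) (hq' : ∀ x, q x ≠ x) {x : α} (hx : p x ≠ q x) :
    ({x, p x, q x, p (q x)} : Set α) ⊆ {x | p x ≠ q x} ∧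
      ({x, p x, q x, p (q x)} : Set α).ncard = 4 := by
  classical
  have n4 : p (q x) ≠ x := fun h => hx (by rw [← h, hp, h])
  have n5 : p (q x) ≠ p x := fun h => hq' x (p.injective h)
  constructor
  · rintro y (rfl | rfl | rfl | rfl)
    · exact hx
    · intro h
      rw [hp] at h
      exact hx (by rw [h, hq, ← h])
    · intro h
      rw [hq] at h
      exact n4 h
    · intro h
      rw [hp] at h
      exact n4 (q.injective h.symm)
  · have : ({x, p x, q x, p (q x)} : Set α) = (({x, p x, q x, p (q x)} : Finset α) : Set α) := by
      simp
    rw [this, Set.ncard_coe_finset]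
    rw [Finset.card_insert_of_notMem, Finset.card_insert_of_notMem, Finset.card_insert_of_notMem,
      Finset.card_singleton]
    · simpa using (hp' (q x)).symm
    · simp only [Finset.mem_insert, Finset.mem_singleton, not_or]
      exact ⟨hx, n5.symm⟩
    · simp only [Finset.mem_insert, Finset.mem_singleton, not_or]
      exact ⟨(hp' x).symm, (hq' x).symm, n4.symm⟩

lemma orbits_count (hp : ∀ x, p (p x) = x) (hq : ∀ x, q (q x) = x)
    (hp' : ∀ x, p x ≠ x) (hq' : ∀ x, q x ≠ x) (k : ℕ) (hk : Nat.card α = 2 * k) :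
    k - Nat.card (MulAction.orbitRel.Quotient
      (Subgroup.closure ({p, q} : Set (Equiv.Perm α))) α) = 1 ↔
    {x | p x ≠ q x}.ncard = 4 := by
  classical
  set G := Subgroup.closure ({p, q} : Set (Equiv.Perm α)) with hG
  set Ω := MulAction.orbitRel.Quotient G α with hΩ
  have : Finite Ω := Quotient.finite _
  have : Fintype Ω := Fintype.ofFinite Ω
  have hsum : ∑ ω : Ω, (MulAction.orbitRel.Quotient.orbit ω).ncard = 2 * k := by
    rw [← hk, Nat.card_congr (MulAction.selfEquivSigmaOrbits' G α), Nat.card_sigma]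
    simp only [Nat.card_coe_set_eq]
    rfl
  let mk : α → Ω := fun x => Quotient.mk'' x
  have hmk : ∀ x, MulAction.orbitRel.Quotient.orbit (mk x) = MulAction.orbit G x :=
    fun x => MulAction.orbitRel.Quotient.orbit_mk x
  have hout : ∀ ω : Ω, ∃ x, mk x = ω := fun ω => Quotient.exists_rep ω
  have h2 : ∀ x, p x = q x → (MulAction.orbit G x).ncard = 2 := by
    intro x hx
    have : MulAction.orbit G x = {x, p x} := by
      apply Set.Subset.antisymm
      · apply orb_inv hp hq
        · rintro y (rfl | rfl)
          · simp [← hx]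
          · refine ⟨by simp [hp], ?_⟩
            rw [hx, hq]; simp
        · simp
      · rintro y (rfl | rfl)
        · exact MulAction.mem_orbit_self _
        · exact orb_p _
    rw [this, Set.ncard_pair (hp' x).symm]
  have h4 : ∀ x, p x ≠ q x → {x, p x, q x, p (q x)} ⊆ MulAction.orbit G x := by
    rintro x hx y (rfl | rfl | rfl | rfl)
    · exact MulAction.mem_orbit_self _
    · exact orb_p _
    · exact orb_q _
    · exact orb_pq _
  have h4' : ∀ x, p x ≠ q x → 4 ≤ (MulAction.orbit G x).ncard := by
    intro x hx
    rw [← (perm_four hp hq hp' hq' hx).2]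
    exact Set.ncard_le_ncard (h4 x hx) (Set.toFinite _)
  have hge : ∀ ω : Ω, 2 ≤ (MulAction.orbitRel.Quotient.orbit ω).ncard := by
    intro ω
    obtain ⟨x, rfl⟩ := hout ω
    rw [hmk]
    by_cases hx : p x = q x
    · exact (h2 x hx).ge
    · have := h4' x hx; omega
  have hsum' : ∑ ω : Ω, ((MulAction.orbitRel.Quotient.orbit ω).ncard - 2) + 2 * Nat.card Ω
      = 2 * k := by
    rw [← hsum, Nat.card_eq_fintype_card]
    have : 2 * Fintype.card Ω = ∑ ω : Ω, 2 := by simp [mul_comm]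
    rw [this, ← Finset.sum_add_distrib]
    exact Finset.sum_congr rfl fun ω _ => Nat.sub_add_cancel (hge ω)
  have hiff : k - Nat.card Ω = 1 ↔
      ∑ ω : Ω, ((MulAction.orbitRel.Quotient.orbit ω).ncard - 2) = 2 := by omega
  rw [hiff]
  constructor
  · intro hs
    have hex : ∃ x, p x ≠ q x := by
      by_contra hne
      push Not at hne
      rw [Finset.sum_eq_zero] at hs
      · omega
      · intro ω _
        obtain ⟨x, rfl⟩ := hout ω
        rw [hmk, h2 x (hne x)]; norm_num
    obtain ⟨x, hx⟩ := hex
    have hx4 := h4' x hx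
    have hsplit := Finset.add_sum_erase Finset.univ
      (fun ω : Ω => (MulAction.orbitRel.Quotient.orbit ω).ncard - 2) (Finset.mem_univ (mk x))
    simp only [hmk] at hsplit
    rw [hs] at hsplit
    have hrest : ∑ ω ∈ Finset.univ.erase (mk x),
      ((MulAction.orbitRel.Quotient.orbit ω).ncard - 2) = 0 := by omega
    rw [Finset.sum_eq_zero_iff] at hrest
    have hcard : (MulAction.orbit G x).ncard = 4 := by omega
    apply le_antisymm
    · rw [← hcard]
      refine Set.ncard_le_ncard (fun y hy => ?_) (Set.toFinite _)
      have hy4 := h4' y hy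
      by_cases e : mk y = mk x
      · rw [← hmk, ← e, hmk]
        exact MulAction.mem_orbit_self _
      · have := hrest (mk y) (Finset.mem_erase.2 ⟨e, Finset.mem_univ _⟩)
        rw [hmk] at this
        omega
    · rw [← (perm_four hp hq hp' hq' hx).2]
      exact Set.ncard_le_ncard (perm_four hp hq hp' hq' hx).1 (Set.toFinite _)
  · intro hT
    obtain ⟨x, hx⟩ : {x | p x ≠ q x}.Nonempty := by
      rw [← Set.ncard_pos (Set.toFinite _)]; omega
    have hx : p x ≠ q x := hx
    obtain ⟨s1, s2⟩ := perm_four hp hq hp' hq' hx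
    have hTeq : {x, p x, q x, p (q x)} = {x | p x ≠ q x} :=
      Set.eq_of_subset_of_ncard_le s1 (by omega) (Set.toFinite _)
    have horb : MulAction.orbit G x = {x | p x ≠ q x} := by
      apply Set.Subset.antisymm
      · apply orb_inv hp hq _ _ _ hx
        intro y hy
        have := (perm_four hp hq hp' hq' (x := y) hy).1
        exact ⟨this (by simp), this (by simp)⟩
      · rw [← hTeq]; exact h4 x hx
    rw [Finset.sum_eq_single (mk x)]
    · rw [hmk, horb, hT]
    · intro ω _ hω
      obtain ⟨y, rfl⟩ := hout ω
      rw [hmk]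
      by_cases hy : p y = q y
      · rw [h2 y hy]; norm_num
      · exfalso
        have : y ∈ MulAction.orbit G x := by rw [horb]; exact hy
        rw [← hmk, MulAction.orbitRel.Quotient.mem_orbit] at this
        exact hω this
    · simp

end orb

/-- the function on ℕ attached to a diagram -/
def toF {k : ℕ} (p : NCPair k) (x : ℕ) : ℕ := if h : x < 2 * k then (p.1 ⟨x, h⟩ : ℕ) else x

lemma toF_val {k : ℕ} (p : NCPair k) (x : Fin (2 * k)) : toF p x = p.1 x := by
  simp [toF]

lemma toF_isNC {k : ℕ} (p : NCPair k) : IsNC 0 (0 + 2 * k) (toF p) := by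
  obtain ⟨h1, h2, h3⟩ := p.2
  have hlt : ∀ x, x < 2 * k → toF p x < 2 * k := by
    intro x hx; simp [toF, hx]
  have hout : ∀ x, ¬ x < 2 * k → toF p x = x := by
    intro x hx; simp [toF, hx]
  have hinv : ∀ x, toF p (toF p x) = x := by
    intro x
    by_cases hx : x < 2 * k
    · have e := toF_val p ⟨x, hx⟩
      have e2 := toF_val p (p.1 ⟨x, hx⟩)
      rw [h1] at e2
      simp only at e e2
      rw [e, e2]
    · rw [hout x hx, hout x hx]
  constructor
  · intro x hx; exact hout x (by omega)
  · intros; omega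
  · intro x _ hx; have := hlt x (by omega); omega
  · intro x _ hx e
    have e1 := toF_val p ⟨x, by omega⟩
    apply h2 ⟨x, by omega⟩
    apply Fin.ext
    rw [← e1]; exact e
  · exact hinv
  · intro x y hxy hyx
    by_contra hc
    have hne : toF p y ≠ toF p x := fun e => by
      have := congrArg (toF p) e
      rw [hinv, hinv] at this
      omega
    have hx : x < 2 * k := by
      by_contra hx; rw [hout x hx] at hyx; omega
    have hx' := hlt x hx
    have hy : y < 2 * k := by omega
    have hy' := hlt y hy
    refine h3 ⟨x, hx⟩ ⟨y, hy⟩ ⟨toF p x, hx'⟩ ⟨toF p y, hy'⟩ ?_ ?_ ?_ ?_ ?_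
    · exact hxy
    · exact hyx
    · change toF p x < toF p y; omega
    · exact Fin.ext (toF_val p ⟨x, hx⟩).symm
    · exact Fin.ext (toF_val p ⟨y, hy⟩).symm

lemma toF_inj {k : ℕ} : Function.Injective (toF (k := k)) := by
  intro p q h
  apply Subtype.ext
  ext x
  rw [← toF_val, ← toF_val, h]

lemma toF_surj {k : ℕ} {f : ℕ → ℕ} (hf : IsNC 0 (0 + 2 * k) f) : ∃ p : NCPair k, toF p = f := by
  have hlt : ∀ x : Fin (2 * k), f x < 2 * k := fun x => by
    have := hf.lt x (by omega) (by omega)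
    omega
  let F : Fin (2 * k) → Fin (2 * k) := fun x => ⟨f x, hlt x⟩
  have hF : ∀ x, F (F x) = x := fun x => Fin.ext (hf.inv x)
  refine ⟨⟨⟨F, F, hF, hF⟩, hF, ?_, ?_⟩, ?_⟩
  · intro x e
    exact hf.ne x (by omega) (by omega) (congrArg Fin.val e)
  · intro a b c d hab hbc hcd e1 e2
    have e1 : f a = c := congrArg Fin.val e1
    have e2 : f b = d := congrArg Fin.val e2
    have := hf.nc a b hab (by rw [e1]; exact hbc)
    rw [e1, e2] at this
    have hcd : (c : ℕ) < d := hcd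
    omega
  · funext x
    by_cases hx : x < 2 * k
    · simp [toF, hx, F]
    · simp only [toF, hx, dif_neg, not_false_eq_true]
      exact (hf.out x (by omega)).symm

lemma loopDist_iff {k : ℕ} (p q : NCPair k) :
    loopDist p q = 1 ↔ (dis (toF p) (toF q)).ncard = 4 := by
  unfold loopDist loops
  rw [orbits_count p.2.1 q.2.1 p.2.2.1 q.2.2.1 k (by simp)]
  have : dis (toF p) (toF q) = Fin.val '' {x | p.1 x ≠ q.1 x} := by
    ext x
    constructor
    · intro hx
      have hx : toF p x ≠ toF q x := hx
      have hlt : x < 2 * k := by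
        by_contra hc
        apply hx
        simp [toF, hc]
      refine ⟨⟨x, hlt⟩, fun e => hx ?_, rfl⟩
      have e1 := toF_val p ⟨x, hlt⟩
      have e2 := toF_val q ⟨x, hlt⟩
      simp only at e1 e2
      rw [e1, e2, e]
    · rintro ⟨y, hy, rfl⟩ e
      rw [toF_val, toF_val] at e
      exact hy (Fin.ext e)
  rw [this, Set.ncard_image_of_injective _ Fin.val_injective]

lemma Ncount_eq (k : ℕ) : Ncount k = Nat.card (PS 0 (0 + 2 * k)) := by
  unfold Ncount
  refine Nat.card_congr (Equiv.ofBijective (fun pq => ⟨(toF pq.1.1, toF pq.1.2),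
    toF_isNC _, toF_isNC _, (loopDist_iff _ _).1 pq.2⟩) ⟨?_, ?_⟩)
  · rintro ⟨⟨p, q⟩, h⟩ ⟨⟨p', q'⟩, h'⟩ e
    have e := congrArg Subtype.val e
    simp only [Prod.mk.injEq] at e
    apply Subtype.ext
    exact Prod.ext (toF_inj e.1) (toF_inj e.2)
  · rintro ⟨⟨f, g⟩, hf, hg, hd⟩
    obtain ⟨p, rfl⟩ := toF_surj hf
    obtain ⟨q, rfl⟩ := toF_surj hg
    exact ⟨⟨(p, q), (loopDist_iff p q).2 hd⟩, rfl⟩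

/-- For |z| < 1/2, the generating series of the neighbor counts N_k satisfies
∑_{k=0}^∞ N_k · z^{2k} = 32z⁴ / ((1 + √(1 − 4z²))⁴ √(1 − 4z²)). -/
theorem neighbor_generating_series (z : ℝ) (hz : |z| < 1 / 2) :
    HasSum (fun k : ℕ => (Ncount k : ℝ) * z ^ (2 * k))
      (32 * z ^ 4 /
        ((1 + Real.sqrt (1 - 4 * z ^ 2)) ^ 4 * Real.sqrt (1 - 4 * z ^ 2))) := by
  have h := nbS_sum z hz
  have e : ∀ k, (Ncount k : ℝ) = PowerSeries.coeff k nbS := fun k => by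
    rw [Ncount_eq, card_PS, nbE, expand_coeffs]
  simpa only [e] using h
end

section
/- Fix k ≥ 1 and let N_k be the number of ordered pairs (p,q) ∈ D(k) × D(k) with d(p,q) = 1. Then there exist n₀ ∈ ℕ and a constant C > 0 such that for every integer n ≥ n₀: |n^k · ∑_{p,q ∈ D(k)} W_{kn}(p,q) − catalan k + N_k · n^{−1}| ≤ C · n^{−2}. (This is the second-order estimate for the moments of n^{1/2} u₁₁ in A_o(n).) -/
open scoped BigOperators

/-- Non-crossing fixed-point-free involutions of the interval [a, a+m), extended by identity. -/
def NCProp (a m : ℕ) (f : ℕ → ℕ) : Prop :=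
  (∀ x, f (f x) = x) ∧ (∀ x, x < a ∨ a + m ≤ x → f x = x) ∧
  (∀ x, a ≤ x → x < a + m → f x ≠ x) ∧
  (∀ x, a ≤ x → x < a + m → a ≤ f x ∧ f x < a + m) ∧
  (∀ x y, ¬ (a ≤ x ∧ x < y ∧ y < f x ∧ f x < f y ∧ f y < a + m))

def NCInt (a m : ℕ) : Type := {f : ℕ → ℕ // NCProp a m f}

lemma ncprop_left {a m : ℕ} {f : ℕ → ℕ} (hf : NCProp a (m + 2) f) :
    NCProp (a + 1) (f a - a - 1) (fun x => if a < x ∧ x < f a then f x else x) := by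
  obtain ⟨h1, h2, h3, h4, h5⟩ := hf
  have ha := h4 a le_rfl (by omega)
  have ha' := h3 a le_rfl (by omega)
  have key : ∀ x, a < x → x < f a → a < f x ∧ f x < f a := by
    intro x hx hx'
    have e1 := h4 x (by omega) (by omega)
    have e2 : f x ≠ a := fun h => by have := h1 x; rw [h] at this; omega
    have e3 : f x ≠ f a := fun h => by have := h1 x; rw [h, h1] at this; omega
    have e4 := h5 a x
    omega
  refine ⟨?_, ?_, ?_, ?_, ?_⟩
  · intro x
    by_cases hx : a < x ∧ x < f a
    · have := key x hx.1 hx.2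
      simp [hx, this, h1]
    · simp [hx]
  · intro x hx
    have : ¬ (a < x ∧ x < f a) := by omega
    simp [this]
  · intro x hx hx'
    have : a < x ∧ x < f a := by omega
    simp only [this, and_self, if_true]
    exact h3 x (by omega) (by omega)
  · intro x hx hx'
    have : a < x ∧ x < f a := by omega
    simp only [this, and_self, if_true]
    have := key x this.1 this.2
    omega
  · intro x y
    have := key x
    have := key y
    have := h5 x y
    beta_reduce
    split_ifs <;> omega

lemma ncprop_right {a m : ℕ} {f : ℕ → ℕ} (hf : NCProp a (m + 2) f) :
    NCProp (f a + 1) (m - (f a - a - 1)) (fun x => if f a < x then f x else x) := by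
  obtain ⟨h1, h2, h3, h4, h5⟩ := hf
  have ha := h4 a le_rfl (by omega)
  have ha' := h3 a le_rfl (by omega)
  have key : ∀ x, f a < x → x < a + m + 2 → f a < f x ∧ f x < a + m + 2 := by
    intro x hx hx'
    have e1 := h4 x (by omega) (by omega)
    have e2 : f x ≠ a := fun h => by have := h1 x; rw [h] at this; omega
    have e3 : f x ≠ f a := fun h => by have := h1 x; rw [h, h1] at this; omega
    have e4 := h5 a (f x)
    rw [h1] at e4
    omega
  refine ⟨?_, ?_, ?_, ?_, ?_⟩
  · intro x
    by_cases hx : f a < x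
    · by_cases hx' : x < a + m + 2
      · have := key x hx hx'
        simp [hx, this, h1]
      · simp [hx, h2 x (by omega)]
    · simp [hx]
  · intro x hx
    by_cases hx' : f a < x
    · simp [hx', h2 x (by omega)]
    · simp [hx']
  · intro x hx hx'
    have : f a < x := by omega
    simp only [this, if_true]
    exact h3 x (by omega) (by omega)
  · intro x hx hx'
    have : f a < x := by omega
    simp only [this, if_true]
    have := key x this (by omega)
    omega
  · intro x y
    have := h5 x y
    beta_reduce
    split_ifs <;> omega

lemma ncprop_glue {a m i : ℕ} (hi : i ≤ m) {g h : ℕ → ℕ} (hg : NCProp (a + 1) i g)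
    (hh : NCProp (a + i + 2) (m - i) h) :
    NCProp a (m + 2) (fun x => if x = a then a + i + 1 else if x = a + i + 1 then a
      else if x < a + i + 1 then g x else h x) := by
  obtain ⟨g1, g2, g3, g4, g5⟩ := hg
  obtain ⟨h1, h2, h3, h4, h5⟩ := hh
  refine ⟨?_, ?_, ?_, ?_, ?_⟩
  · intro x
    have := g1 x
    have := g2 x
    have := g4 x
    have := h1 x
    have := h2 x
    have := h4 x
    beta_reduce
    split_ifs <;> omega
  · intro x hx
    have := g2 x
    have := h2 x
    beta_reduce
    split_ifs <;> omega
  · intro x hx hx'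
    have := g3 x
    have := h3 x
    beta_reduce
    split_ifs <;> omega
  · intro x hx hx'
    have := g4 x
    have := h4 x
    beta_reduce
    split_ifs <;> omega
  · intro x y
    have := g4 x
    have := h4 x
    have := g4 y
    have := h4 y
    have := h2 x
    have := h2 y
    have := g5 x y
    have := h5 x y
    beta_reduce
    split_ifs <;> omega

lemma ncint_sigma_ext {a m : ℕ} {s t : Σ i : Fin (m + 1), NCInt (a + 1) i × NCInt (a + i + 2) (m - i)}
    (h0 : s.1 = t.1) (h1 : s.2.1.1 = t.2.1.1) (h2 : s.2.2.1 = t.2.2.1) : s = t := by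
  obtain ⟨i, ⟨g, hg⟩, ⟨h, hh⟩⟩ := s
  obtain ⟨j, ⟨g', hg'⟩, ⟨h', hh'⟩⟩ := t
  simp only at h0 h1 h2
  subst h0 h1 h2
  rfl

def ncintGlue (a m : ℕ) (s : Σ i : Fin (m + 1), NCInt (a + 1) i × NCInt (a + i + 2) (m - i)) :
    NCInt a (m + 2) :=
  ⟨_, ncprop_glue (Nat.lt_succ_iff.mp s.1.2) s.2.1.2 s.2.2.2⟩

lemma ncintGlue_bij (a m : ℕ) : Function.Bijective (ncintGlue a m) := by
  constructor
  · intro s t hst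
    have H : ∀ x, (ncintGlue a m s).1 x = (ncintGlue a m t).1 x := fun x => by rw [hst]
    simp only [ncintGlue] at H
    have h0 : s.1 = t.1 := by
      have := H a
      simp at this
      exact Fin.ext this
    obtain ⟨i, ⟨g, hg⟩, ⟨h, hh⟩⟩ := s
    obtain ⟨j, ⟨g', hg'⟩, ⟨h', hh'⟩⟩ := t
    simp only at h0
    subst h0
    apply ncint_sigma_ext
    · rfl
    · funext x
      have := H x
      have := hg.2.1 x
      have := hg'.2.1 x
      simp only at *
      split_ifs at * <;> omega
    · funext x
      have := H x
      have := hh.2.1 x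
      have := hh'.2.1 x
      simp only at *
      split_ifs at * <;> omega
  · rintro ⟨f, hf⟩
    have ha := hf.2.2.2.1 a le_rfl (by omega)
    have ha' := hf.2.2.1 a le_rfl (by omega)
    have hr := ncprop_right hf
    have e : f a + 1 = a + (f a - a - 1) + 2 := by omega
    rw [e] at hr
    refine ⟨⟨⟨f a - a - 1, by omega⟩, ⟨_, ncprop_left hf⟩, ⟨_, hr⟩⟩, ?_⟩
    apply Subtype.ext
    funext x
    have := hf.2.1 x
    have h1 := hf.1 a
    simp only [ncintGlue]
    split_ifs with c1 c2 <;> first | omega | skip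
    · subst c1; omega
    · have : x = f a := by omega
      rw [this, h1]

lemma ncint_card (m : ℕ) : ∀ a, Finite (NCInt a m) ∧
    Nat.card (NCInt a m) = if Even m then catalan (m / 2) else 0 := by
  induction m using Nat.strong_induction_on with
  | _ m ih =>
  intro a
  rcases m with _ | _ | m
  · have : Unique (NCInt a 0) :=
      { default := ⟨id, by refine ⟨?_, ?_, ?_, ?_, ?_⟩ <;> intros <;> simp_all <;> omega⟩
        uniq := by
          rintro ⟨f, hf⟩
          apply Subtype.ext
          funext x
          exact hf.2.1 x (by omega) }
    exact ⟨inferInstance, by simp⟩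
  · have : IsEmpty (NCInt a 1) := ⟨by
      rintro ⟨f, hf⟩
      have h3 := hf.2.2.1 a le_rfl (by omega)
      have h4 := hf.2.2.2.1 a le_rfl (by omega)
      omega⟩
    exact ⟨inferInstance, by simp⟩
  · have F1 : ∀ i : Fin (m + 1), Finite (NCInt (a + 1) i) := fun i => (ih i (by omega) _).1
    have F2 : ∀ i : Fin (m + 1), Finite (NCInt (a + i + 2) (m - i)) :=
      fun i => (ih _ (by omega) _).1
    have E := Equiv.ofBijective _ (ncintGlue_bij a m)
    refine ⟨Finite.of_equiv _ E, ?_⟩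
    show Nat.card (NCInt a (m + 2)) = if Even (m + 2) then catalan ((m + 2) / 2) else 0
    rw [← Nat.card_congr E, Nat.card_sigma]
    simp only [Nat.card_prod]
    rw [Finset.sum_congr rfl (fun i _ => by
      rw [(ih i (by omega) _).2, (ih (m - i) (by omega) _).2])]
    rw [Fin.sum_univ_eq_sum_range (fun i => (if Even i then catalan (i / 2) else 0) *
      (if Even (m - i) then catalan ((m - i) / 2) else 0)) (m + 1)]
    by_cases hm : Even m
    · obtain ⟨r, rfl⟩ := hm
      have e : (r + r + 2) / 2 = r + 1 := by omega
      rw [if_pos (by grind), e, catalan_succ,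
        Fin.sum_univ_eq_sum_range (fun i => catalan i * catalan (r - i)) (r + 1)]
      symm
      apply Finset.sum_of_injOn (fun i => 2 * i)
      · intro x _ y _ h; simp only at h; omega
      · intro x hx; simp at hx ⊢; omega
      · intro x hx hx'
        by_cases hx2 : Even x
        · obtain ⟨y, rfl⟩ := hx2
          exfalso; apply hx'
          simp at hx ⊢
          exact ⟨y, by omega, by omega⟩
        · simp [hx2]
      · intro x hx
        simp at hx
        have e1 : Even (2 * x) := by simp
        have e2 : Even (r + r - 2 * x) := ⟨r - x, by omega⟩
        have e3 : 2 * x / 2 = x := by omega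
        have e4 : (r + r - 2 * x) / 2 = r - x := by omega
        simp only [if_pos e1, if_pos e2, e3, e4]
    · rw [if_neg (by grind)]
      apply Finset.sum_eq_zero
      intro x hx
      simp at hx
      by_cases hx2 : Even x
      · have : ¬ Even (m - x) := by grind
        simp [this]
      · simp [hx2]

def ncpairToInt (k : ℕ) (p : NCPair k) : NCInt 0 (2 * k) :=
  ⟨fun x => if h : x < 2 * k then (p.1 ⟨x, h⟩ : ℕ) else x, by
    obtain ⟨p, h1, h2, h3⟩ := p
    refine ⟨?_, ?_, ?_, ?_, ?_⟩
    · intro x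
      by_cases h : x < 2 * k
      · simp [h, h1]
      · simp [h]
    · intro x hx
      have h : ¬ x < 2 * k := by omega
      simp [h]
    · intro x _ hx
      have h : x < 2 * k := by omega
      have := h2 ⟨x, h⟩
      simp only [h, dif_pos]
      intro h'
      exact this (Fin.ext h')
    · intro x _ hx
      have h : x < 2 * k := by omega
      simp [h]
    · rintro x y ⟨_, hxy, hy, hz, hw⟩
      have hx2 : x < 2 * k := by
        by_contra h
        simp [h] at hy
        omega
      have hy2 : y < 2 * k := by
        by_contra h
        simp [h] at hw
      simp only [hx2, hy2, dif_pos] at hy hz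
      exact h3 ⟨x, hx2⟩ ⟨y, hy2⟩ _ _ hxy hy hz rfl rfl⟩

lemma ncpairToInt_bij (k : ℕ) : Function.Bijective (ncpairToInt k) := by
  constructor
  · intro p q hpq
    apply Subtype.ext
    ext x
    have : (ncpairToInt k p).1 x = (ncpairToInt k q).1 x := by rw [hpq]
    simpa [ncpairToInt] using this
  · rintro ⟨f, h1, h2, h3, h4, h5⟩
    have hb : ∀ x : Fin (2 * k), f x < 2 * k := fun x => by
      have := h4 x (by omega) (by omega)
      omega
    refine ⟨⟨Function.Involutive.toPerm (fun x => ⟨f x, hb x⟩) ?_, ?_, ?_, ?_⟩, ?_⟩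
    · intro x; simp [h1]
    · intro x; exact Fin.ext (h1 x)
    · intro x h
      have := h3 x (by omega) (by omega)
      exact this (congrArg Fin.val h)
    · intro a b c d hab hbc hcd hac hbd
      have e1 : f a = c := congrArg Fin.val hac
      have e2 : f b = d := congrArg Fin.val hbd
      exact h5 a b ⟨by omega, hab, by omega, by omega, by omega⟩
    · apply Subtype.ext
      funext x
      by_cases h : x < 2 * k
      · simp only [ncpairToInt, h, dif_pos]
        rfl
      · simp [ncpairToInt, h, h2 x (by omega)]

lemma ncpair_card (k : ℕ) : Fintype.card (NCPair k) = catalan k := by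
  rw [← Nat.card_eq_fintype_card, Nat.card_congr (Equiv.ofBijective _ (ncpairToInt_bij k)),
    (ncint_card _ _).2]
  simp

section loopsec
variable {k : ℕ} (p q : NCPair k)

lemma loops_spec : loops p q ≤ k ∧ (loops p q = k ↔ p = q) := by
  classical
  set H := Subgroup.closure ({p.1, q.1} : Set (Equiv.Perm (Fin (2 * k)))) with hH
  let π : Fin (2 * k) → MulAction.orbitRel.Quotient H (Fin (2 * k)) := Quotient.mk _
  have hl : loops p q = Fintype.card (MulAction.orbitRel.Quotient H (Fin (2 * k))) :=
    Nat.card_eq_fintype_card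
  have hp : ∀ x, π (p.1 x) = π x := fun x =>
    Quotient.sound ⟨⟨p.1, Subgroup.subset_closure (by simp)⟩, rfl⟩
  have hq : ∀ x, π (q.1 x) = π x := fun x =>
    Quotient.sound ⟨⟨q.1, Subgroup.subset_closure (by simp)⟩, rfl⟩
  have hsum : 2 * k = ∑ ω, (Finset.univ.filter (fun x => π x = ω)).card := by
    have := Finset.card_eq_sum_card_fiberwise (f := π) (s := Finset.univ) (t := Finset.univ)
      (by simp)
    simpa using this
  have hge : ∀ ω ∈ (Finset.univ : Finset (MulAction.orbitRel.Quotient H (Fin (2 * k)))),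
      2 ≤ (Finset.univ.filter (fun x => π x = ω)).card := by
    intro ω _
    obtain ⟨x, rfl⟩ := Quotient.exists_rep ω
    have : ({x, p.1 x} : Finset _) ⊆ Finset.univ.filter (fun y => π y = π x) := by
      intro y hy
      simp at hy
      rcases hy with rfl | rfl <;> simp [hp]
    calc 2 = ({x, p.1 x} : Finset _).card := (Finset.card_pair (p.2.2.1 x).symm).symm
      _ ≤ _ := Finset.card_le_card this
  have hle : ∑ ω : MulAction.orbitRel.Quotient H (Fin (2 * k)), 2 ≤
      ∑ ω, (Finset.univ.filter (fun x => π x = ω)).card := Finset.sum_le_sum hge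
  have hc : ∑ ω : MulAction.orbitRel.Quotient H (Fin (2 * k)), 2 = 2 * loops p q := by
    rw [hl]; simp [mul_comm]
  refine ⟨by omega, ?_, ?_⟩
  · intro h
    have heq := (Finset.sum_eq_sum_iff_of_le hge).mp (by omega)
    apply Subtype.ext
    ext x
    have h2 := heq (π x) (Finset.mem_univ _)
    by_contra hne
    have : ({x, p.1 x, q.1 x} : Finset _) ⊆ Finset.univ.filter (fun y => π y = π x) := by
      intro y hy
      simp at hy
      rcases hy with rfl | rfl | rfl <;> simp [hp, hq]
    have h3 := Finset.card_le_card this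
    rw [Finset.card_eq_three.mpr ⟨x, p.1 x, q.1 x, (p.2.2.1 x).symm, (q.2.2.1 x).symm,
      fun h => hne (congrArg Fin.val h), rfl⟩] at h3
    omega
  · intro h
    -- each orbit is exactly a pair
    have hstab : ∀ g ∈ H, ∀ x, g x = x ∨ g x = p.1 x := by
      intro g hg
      rw [hH, ← h] at hg
      refine Subgroup.closure_induction (p := fun g _ => ∀ x, g x = x ∨ g x = p.1 x)
        ?_ ?_ ?_ ?_ hg
      · intro g hg x
        simp at hg
        right; rw [hg]
      · intro x; left; rfl
      · intro a b _ _ ha hb x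
        have hpp := p.2.1 x
        have := ha (b x)
        rcases hb x with e | e <;> rw [Equiv.Perm.mul_apply, e] <;> rw [e] at this
        · exact this
        · rw [hpp] at this; tauto
      · intro a _ ha x
        have hpp := p.2.1
        rcases ha (a⁻¹ x) with e | e
        · left; simpa using e.symm
        · right
          have e' : x = p.1 (a⁻¹ x) := by simpa using e
          conv_rhs => rw [e']
          rw [hpp]
    have hle2 : ∑ ω, (Finset.univ.filter (fun x => π x = ω)).card ≤
        ∑ ω : MulAction.orbitRel.Quotient H (Fin (2 * k)), 2 := by
      apply Finset.sum_le_sum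
      intro ω _
      obtain ⟨x, rfl⟩ := Quotient.exists_rep ω
      have : Finset.univ.filter (fun y => π y = π x) ⊆ ({x, p.1 x} : Finset _) := by
        intro y hy
        simp only [Finset.mem_filter, Finset.mem_univ, true_and] at hy
        obtain ⟨g, hg⟩ := Quotient.exact hy
        have := hstab g.1 g.2 x
        have hg' : g.1 x = y := hg
        rw [hg'] at this
        simpa using this
      exact (Finset.card_le_card this).trans Finset.card_le_two
    omega

end loopsec

attribute [local instance] Matrix.linftyOpNormedRing Matrix.linftyOpNormedAlgebra

lemma matrix_abs_sum_le {ι : Type*} [Fintype ι] [DecidableEq ι] (M : Matrix ι ι ℝ) :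
    |∑ p, ∑ q, M p q| ≤ Fintype.card ι * ‖M‖ := by
  calc |∑ p, ∑ q, M p q| ≤ ∑ p, |∑ q, M p q| := Finset.abs_sum_le_sum_abs _ _
    _ ≤ ∑ p : ι, ‖M‖ := by
      apply Finset.sum_le_sum
      intro p _
      refine (Finset.abs_sum_le_sum_abs _ _).trans ?_
      rw [Matrix.linfty_opNorm_def]
      have := Finset.le_sup (f := fun i => ∑ j, ‖M i j‖₊) (Finset.mem_univ p)
      have := NNReal.coe_le_coe.mpr this
      simpa using this
    _ = _ := by simp

lemma matrix_norm_le {ι : Type*} [Fintype ι] [DecidableEq ι] (M : Matrix ι ι ℝ) (c : ℝ)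
    (hc : 0 ≤ c) (h : ∀ p q, |M p q| ≤ c) : ‖M‖ ≤ Fintype.card ι * c := by
  lift c to NNReal using hc
  rw [Matrix.linfty_opNorm_def]
  have : (Finset.univ.sup fun i => ∑ j, ‖M i j‖₊) ≤ Fintype.card ι * c := by
    apply Finset.sup_le
    intro i _
    calc ∑ j, ‖M i j‖₊ ≤ ∑ j : ι, c := Finset.sum_le_sum fun j _ => by
          rw [← NNReal.coe_le_coe]; simpa using h i j
      _ = _ := by simp
  exact_mod_cast this

/-- Abstract expansion. -/
lemma inv_expand {ι : Type*} [Fintype ι] [DecidableEq ι] :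
    ∃ δ : ℝ, 0 < δ ∧ ∃ C : ℝ, 0 < C ∧ ∀ t : Matrix ι ι ℝ, ‖t‖ < δ →
      ‖(1 + t)⁻¹ - 1 + t‖ ≤ C * ‖t‖ ^ 2 := by
  have h := NormedRing.inverse_add_norm_diff_second_order (1 : (Matrix ι ι ℝ)ˣ)
  obtain ⟨C, hC, h⟩ := h.exists_pos
  rw [Asymptotics.isBigOWith_iff, Metric.eventually_nhds_iff] at h
  obtain ⟨δ, hδ, h⟩ := h
  refine ⟨δ, hδ, C, hC, fun t ht => ?_⟩
  have := @h t (by simpa using ht)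
  simpa [Matrix.nonsing_inv_eq_ringInverse] using this

/-- Second-order estimate for the moments of n^{1/2} u₁₁ in A_o(n):
n^k ∑_{p,q} W_{kn}(p,q) = catalan k − N_k n^{−1} + O(n^{−2}). -/
theorem moment_second_order (k : ℕ) (hk : 1 ≤ k) :
    ∃ n₀ : ℕ, ∃ C : ℝ, 0 < C ∧ ∀ n : ℕ, n₀ ≤ n →
      |(n : ℝ) ^ k * (∑ p : NCPair k, ∑ q : NCPair k, (Gram k n)⁻¹ p q)
          - catalan k + (Ncount k : ℝ) * (n : ℝ)⁻¹|
        ≤ C * ((n : ℝ)⁻¹) ^ 2 := by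
  obtain ⟨δ, hδ, C, hC, hexp⟩ := inv_expand (ι := NCPair k)
  set N : ℝ := ((Fintype.card (NCPair k) : ℕ) : ℝ) with hN
  have hN0 : 0 ≤ N := by positivity
  obtain ⟨n₁, hn₁⟩ := exists_nat_gt (N / δ)
  refine ⟨n₁ + 1, N * (C * N ^ 2) + N * N + 1, by positivity, fun n hn => ?_⟩
  have hn1 : (1 : ℝ) ≤ n := by exact_mod_cast (by omega : 1 ≤ n)
  have hn0 : (0 : ℝ) < n := by linarith
  have hnn : (n₁ : ℝ) ≤ n := by exact_mod_cast (by omega : n₁ ≤ n)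
  set x : ℝ := (n : ℝ)⁻¹ with hx
  have hx0 : 0 < x := by positivity
  have hx1 : x ≤ 1 := inv_le_one_of_one_le₀ hn1
  -- the error matrix
  let t : Matrix (NCPair k) (NCPair k) ℝ := fun p q => if p = q then 0 else x ^ loopDist p q
  have hd : ∀ p q : NCPair k, p ≠ q → 1 ≤ loopDist p q := by
    intro p q h
    have := loops_spec p q
    have h2 : loops p q ≠ k := fun e => h (this.2.mp e)
    unfold loopDist
    omega
  have hd0 : ∀ p : NCPair k, loopDist p p = 0 := by
    intro p
    have := (loops_spec p p).2.mpr rfl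
    unfold loopDist
    omega
  have hG : Gram k n = (n : ℝ) ^ k • (1 + t) := by
    ext p q
    have hs := loops_spec p q
    have e : (n : ℝ) ^ loops p q = (n : ℝ) ^ k * x ^ loopDist p q := by
      rw [hx, inv_pow, loopDist]
      rw [eq_mul_inv_iff_mul_eq₀ (by positivity), ← pow_add]
      congr 1; omega
    have htt : t p q = if p = q then 0 else x ^ loopDist p q := rfl
    rw [Matrix.smul_apply, Matrix.add_apply, Matrix.one_apply, htt, smul_eq_mul]
    simp only [Gram, e]
    by_cases h : p = q
    · subst h; simp [hd0]
    · simp [h]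
  have ht : ‖t‖ ≤ N * x := by
    apply matrix_norm_le _ _ hx0.le
    intro p q
    simp only [t]
    split_ifs with h
    · simpa using hx0.le
    · rw [abs_of_nonneg (by positivity)]
      exact pow_le_of_le_one hx0.le hx1 (by have := hd p q h; omega)
  have htδ : ‖t‖ < δ := by
    refine ht.trans_lt ?_
    rw [hx, ← div_eq_mul_inv, div_lt_iff₀ hn0]
    rw [div_lt_iff₀ hδ] at hn₁
    nlinarith
  have hinv : (n : ℝ) ^ k • (Gram k n)⁻¹ = (1 + t)⁻¹ := by
    have hu : (n : ℝ) ^ k ≠ 0 := by positivity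
    rw [hG]
    by_cases hdet : IsUnit (1 + t).det
    · have := Matrix.inv_smul' (A := 1 + t) (Units.mk0 _ hu) hdet
      have h2 : ((n : ℝ) ^ k • (1 + t))⁻¹ = ((n : ℝ) ^ k)⁻¹ • (1 + t)⁻¹ := this
      rw [h2, smul_smul, mul_inv_cancel₀ hu, one_smul]
    · have h2 : ¬ IsUnit ((n : ℝ) ^ k • (1 + t)).det := by
        rw [Matrix.det_smul]
        simp only [isUnit_iff_ne_zero, ne_eq, not_not] at hdet ⊢
        rw [hdet, mul_zero]
      rw [Matrix.nonsing_inv_apply_not_isUnit _ hdet, Matrix.nonsing_inv_apply_not_isUnit _ h2,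
        smul_zero]
  have hsum : (n : ℝ) ^ k * (∑ p : NCPair k, ∑ q : NCPair k, (Gram k n)⁻¹ p q) =
      ∑ p, ∑ q, ((1 + t)⁻¹) p q := by
    rw [← hinv]
    simp [Finset.mul_sum]
  set R := (1 + t)⁻¹ - 1 + t with hR
  have hRb : |∑ p, ∑ q, R p q| ≤ N * (C * N ^ 2) * x ^ 2 := by
    refine (matrix_abs_sum_le R).trans ?_
    have h1 := hexp t htδ
    have h2 : ‖t‖ ^ 2 ≤ (N * x) ^ 2 := by gcongr
    calc N * ‖R‖ ≤ N * (C * (N * x) ^ 2) := by gcongr; exact h1.trans (by gcongr)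
      _ = _ := by ring
  have hRs : ∑ p, ∑ q, R p q = ∑ p, ∑ q, ((1 + t)⁻¹) p q - N + ∑ p, ∑ q, t p q := by
    simp [hR, Finset.sum_add_distrib, Finset.sum_sub_distrib, Matrix.one_apply, hN]
  have hNc : (Ncount k : ℝ) * x = ∑ p : NCPair k, ∑ q : NCPair k,
      if loopDist p q = 1 then x else 0 := by
    rw [← Fintype.sum_prod_type' (f := fun p q : NCPair k => if loopDist p q = 1 then x else 0),
      ← Finset.sum_filter, Finset.sum_const, nsmul_eq_mul, Ncount, Nat.card_eq_fintype_card,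
      Fintype.card_subtype]
  have hts : |∑ p, ∑ q, t p q - (Ncount k : ℝ) * x| ≤ N * N * x ^ 2 := by
    rw [hNc, ← Finset.sum_sub_distrib]
    simp only [← Finset.sum_sub_distrib]
    calc _ ≤ ∑ p : NCPair k, ∑ q : NCPair k, x ^ 2 := by
          refine (Finset.abs_sum_le_sum_abs _ _).trans (Finset.sum_le_sum fun p _ => ?_)
          refine (Finset.abs_sum_le_sum_abs _ _).trans (Finset.sum_le_sum fun q _ => ?_)
          simp only [t]
          by_cases h : p = q
          · subst h; simp [hd0]; positivity
          · by_cases h1 : loopDist p q = 1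
            · simp [h, h1]; positivity
            · simp only [h, h1, if_false, sub_zero]
              rw [abs_of_nonneg (by positivity)]
              have := hd p q h
              exact pow_le_pow_of_le_one hx0.le hx1 (by omega)
      _ = _ := by simp [hN]; ring
  rw [hsum, ← ncpair_card k, ← hN]
  have e : ∑ p, ∑ q, ((1 + t)⁻¹) p q - N + (Ncount k : ℝ) * x =
      ∑ p, ∑ q, R p q - (∑ p, ∑ q, t p q - (Ncount k : ℝ) * x) := by rw [hRs]; ring
  rw [e]
  refine (abs_sub _ _).trans ?_
  have : 0 ≤ x ^ 2 := by positivity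
  nlinarith
end
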